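/- arXiv:2004.14726 — 10 statements merged into one kernel-verified Lean document; each statement's English description precedes it below -/
import Mathlib

section
/- Let s ≥ 1 be an integer, q₀ = 2^s and q = 2q₀². Set 𝔤₀ = q² − 2q₀q + q, 𝔤₁ = q² − q₀q + q₀, 𝔤₂ = q² − q + 2q₀, 𝔤₃ = q², 𝔤₄ = q² + 1. Then the numbers h·𝔤₁ + i·𝔤₂ + j·𝔤₃ + k·𝔤₄, for 0 ≤ h ≤ 1, 0 ≤ i ≤ q₀−1, 0 ≤ j ≤ q−2q₀, 0 ≤ k ≤ q₀−1, are pairwise incongruent modulo 𝔤₀; in particular, since there are exactly 2q₀²(q−2q₀+1) = 𝔤₀ such four-tuples, these numbers form a complete set of representatives of the residue classes modulo 𤀀𝔤₀. -/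
set_option maxHeartbeats 2000000 in
/-- Lemma 3.2 (Lemma `lem:apery`) of Beelen–Landi–Montanucci: the numbers
`h·𝔤₁ + i·𝔤₂ + j·𝔤₃ + k·𝔤₄` for `0 ≤ h ≤ 1`, `0 ≤ i ≤ q₀−1`, `0 ≤ j ≤ q−2q₀`,
`0 ≤ k ≤ q₀−1` are pairwise incongruent modulo `𝔤₀`. -/
theorem stmt_0 (s : ℕ) (hs : 1 ≤ s) (q₀ q g₀ g₁ g₂ g₃ g₄ : ℕ)
    (hq₀ : q₀ = 2 ^ s) (hq : q = 2 * q₀ ^ 2)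
    (hg₀ : g₀ = q ^ 2 - 2 * q₀ * q + q) (hg₁ : g₁ = q ^ 2 - q₀ * q + q₀)
    (hg₂ : g₂ = q ^ 2 - q + 2 * q₀) (hg₃ : g₃ = q ^ 2) (hg₄ : g₄ = q ^ 2 + 1) :
    ∀ h i j k h' i' j' k' : ℕ,
      h ≤ 1 → i + 1 ≤ q₀ → j ≤ q - 2 * q₀ → k + 1 ≤ q₀ →
      h' ≤ 1 → i' + 1 ≤ q₀ → j' ≤ q - 2 * q₀ → k' + 1 ≤ q₀ →
      h * g₁ + i * g₂ + j * g₃ + k * g₄ ≡ h' * g₁ + i' * g₂ + j' * g₃ + k' * g₄ [MOD g₀] →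
      h = h' ∧ i = i' ∧ j = j' ∧ k = k' := by
  intro h i j k h' i' j' k' hh hi hj hk hh' hi' hj' hk' hmod
  have ha : 1 ≤ q₀ := by rw [hq₀]; exact Nat.one_le_two_pow
  clear hq₀ hs
  have h2 : 2 * q₀ ≤ q := by rw [hq]; nlinarith
  have e0 : (g₀ : ℤ) = q * (q - 2 * q₀ + 1) := by
    have : 2 * q₀ * q ≤ q ^ 2 := by nlinarith
    rw [hg₀]; push_cast [this]; ring
  have e1 : (g₁ : ℤ) = q ^ 2 - q₀ * q + q₀ := by
    have : q₀ * q ≤ q ^ 2 := by nlinarith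
    rw [hg₁]; push_cast [this]; ring
  have e2 : (g₂ : ℤ) = q ^ 2 - q + 2 * q₀ := by
    have : q ≤ q ^ 2 := by nlinarith
    rw [hg₂]; push_cast [this]; ring
  have hd := (Nat.modEq_iff_dvd.mp hmod)
  push_cast [e0, e1, e2, hg₃, hg₄] at hd
  have hqz : (q : ℤ) = 2 * q₀ ^ 2 := by exact_mod_cast hq
  have haz : (1 : ℤ) ≤ q₀ := by exact_mod_cast ha
  obtain ⟨H, hH⟩ : ∃ H : ℤ, H = h' - h := ⟨_, rfl⟩
  obtain ⟨I, hI⟩ : ∃ I : ℤ, I = i' - i := ⟨_, rfl⟩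
  obtain ⟨J, hJ⟩ : ∃ J : ℤ, J = j' - j := ⟨_, rfl⟩
  obtain ⟨K, hK⟩ : ∃ K : ℤ, K = k' - k := ⟨_, rfl⟩
  have bJ : |J| < (q : ℤ) - 2 * q₀ + 1 := by rw [abs_lt]; omega
  have bH1 : -1 ≤ H := by omega
  have bH2 : H ≤ 1 := by omega
  have bI1 : -((q₀ : ℤ) - 1) ≤ I := by omega
  have bI2 : I ≤ (q₀ : ℤ) - 1 := by omega
  have bK1 : -((q₀ : ℤ) - 1) ≤ K := by omega
  have bK2 : K ≤ (q₀ : ℤ) - 1 := by omega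
  suffices hs : H = 0 ∧ I = 0 ∧ J = 0 ∧ K = 0 by omega
  generalize (q₀ : ℤ) = a at *
  generalize (q : ℤ) = Q at *
  have hd2 : Q * (Q - 2 * a + 1) ∣
      H * (Q ^ 2 - a * Q + a) + I * (Q ^ 2 - Q + 2 * a) + J * Q ^ 2 + K * (Q ^ 2 + 1) := by
    convert hd using 1
    rw [hH, hI, hJ, hK]; ring
  clear hd hH hI hJ hK e0 e1 e2 hmod hg₀ hg₁ hg₂ hg₃ hg₄ hh hi hj hk hh' hi' hj' hk' h2 hq ha
  have hdq : Q ∣ H * a + 2 * a * I + K := by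
    have h3 := (Dvd.intro _ rfl : Q ∣ Q * (Q - 2 * a + 1)).trans hd2
    have h4 : Q ∣ Q * (H * (Q - a) + I * (Q - 1) + J * Q + K * Q) := Dvd.intro _ rfl
    have h5 := dvd_sub h3 h4
    have h6 : H * (Q ^ 2 - a * Q + a) + I * (Q ^ 2 - Q + 2 * a) + J * Q ^ 2 + K * (Q ^ 2 + 1)
        - Q * (H * (Q - a) + I * (Q - 1) + J * Q + K * Q) = H * a + 2 * a * I + K := by ring
    rwa [h6] at h5
  have z0 : H * a + 2 * a * I + K = 0 := by
    apply Int.eq_zero_of_abs_lt_dvd hdq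
    have p1 : 0 ≤ a * (1 - H) := mul_nonneg (by linarith) (by linarith)
    have p2 : 0 ≤ a * (1 + H) := mul_nonneg (by linarith) (by linarith)
    have p3 : 0 ≤ a * (a - 1 - I) := mul_nonneg (by linarith) (by linarith)
    have p4 : 0 ≤ a * (a - 1 + I) := mul_nonneg (by linarith) (by linarith)
    rw [abs_lt]; constructor <;> linarith
  have zK : K = 0 := by
    have : a ∣ K := ⟨-(H + 2 * I), by linear_combination z0⟩
    apply Int.eq_zero_of_abs_lt_dvd this
    rw [abs_lt]; constructor <;> linarith
  have zHI : H + 2 * I = 0 := by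
    have : a * (H + 2 * I) = 0 := by linear_combination z0 - zK
    rcases mul_eq_zero.mp this with h | h
    · omega
    · exact h
  have zH : H = 0 := by omega
  have zI : I = 0 := by omega
  refine ⟨zH, zI, ?_, zK⟩
  have hcop : IsCoprime (Q - 2 * a + 1) Q :=
    ⟨1 + 2 * a * (1 - a), 2 * (1 - a) ^ 2, by rw [hqz]; ring⟩
  have hm : (Q - 2 * a + 1) ∣ J * Q ^ 2 := by
    have := (Dvd.intro_left _ rfl : (Q - 2 * a + 1) ∣ Q * (Q - 2 * a + 1)).trans hd2
    simpa [zH, zI, zK] using this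
  exact Int.eq_zero_of_abs_lt_dvd ((hcop.pow_right).dvd_of_dvd_mul_right hm) bJ
end

section
/- Let s ≥ 1 be an integer, q₀ = 2^s and q = 2q₀². Set 𝔤₀ = q² − 2q₀q + q, 𝔤₁ = q² − q₀q + q₀, 𝔤₂ = q² − q + 2q₀, 𝔤₃ = q², 𝔤₄ = q² + 1. Then the sum of the floors ⌊(h·𝔤₁ + i·𝔤₂ + j·𝔤₃ + k·𝔤₄)/𝔤₀⌋, taken over all four-tuples (h,i,j,k) with 0 ≤ h ≤ 1, 0 ≤ i ≤ q₀−1, 0 ≤ j ≤ q−2q₀, 0 ≤ k ≤ q₀−1, equals (q³ − 2q² + q)/2. -/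
lemma aux_gauss (n : ℕ) : 2 * ∑ i ∈ Finset.range n, (i : ℤ) = n * (n - 1) := by
  induction n with
  | zero => simp
  | succ k ih => rw [Finset.sum_range_succ, mul_add, ih]; push_cast; ring

lemma aux_inj (a q m g₁ g₂ g₄ X Y : ℕ) (ha : 0 < a) (hq : q = 2 * a ^ 2) (hc : Nat.Coprime m q)
    (h1 : g₁ = q * X + a) (h2 : g₂ = q * Y + 2 * a) (h4 : g₄ = q ^ 2 + 1)
    (h i j k h' i' j' k' : ℕ) (hh : h < 2) (hi : i < a) (hj : j < m) (hk : k < a)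
    (hh' : h' < 2) (hi' : i' < a) (hj' : j' < m) (hk' : k' < a)
    (e : (h * g₁ + i * g₂ + j * q ^ 2 + k * g₄) ≡
      (h' * g₁ + i' * g₂ + j' * q ^ 2 + k' * g₄) [MOD (q * m)]) :
    h = h' ∧ i = i' ∧ j = j' ∧ k = k' := by
  have key : ∀ h i j k : ℕ, h < 2 → i < a → k < a →
      (h * g₁ + i * g₂ + j * q ^ 2 + k * g₄) % q = k + a * (h + 2 * i) := by
    intro h i j k hh hi hk
    have : h * g₁ + i * g₂ + j * q ^ 2 + k * g₄ =
        (k + a * (h + 2 * i)) + q * (h * X + i * Y + j * q + k * q) := by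
      subst h1 h2 h4; ring
    rw [this, Nat.add_mul_mod_self_left]
    apply Nat.mod_eq_of_lt
    have : a * (h + 2 * i) ≤ a * (2 * a - 1) := Nat.mul_le_mul_left _ (by omega)
    have h3 : a * (2 * a - 1) + a = q := by
      obtain ⟨b, rfl⟩ : ∃ b, a = b + 1 := ⟨a - 1, by omega⟩
      have : 2 * (b + 1) - 1 = 2 * b + 1 := by omega
      rw [this, hq]; ring
    omega
  have e1 : _ % q = _ % q := e.of_mul_right m
  rw [key h i j k hh hi hk, key h' i' j' k' hh' hi' hk'] at e1
  have ek : k = k' := by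
    have := congrArg (· % a) e1
    simpa [Nat.add_mul_mod_self_left, Nat.mod_eq_of_lt hk, Nat.mod_eq_of_lt hk'] using this
  subst ek
  have e2 : h + 2 * i = h' + 2 * i' := Nat.eq_of_mul_eq_mul_left ha (by omega)
  have eh : h = h' := by omega
  have ei : i = i' := by omega
  subst eh ei
  refine ⟨rfl, rfl, ?_, rfl⟩
  have e3 := (Nat.ModEq.add_left_cancel' _ (Nat.ModEq.add_right_cancel' _ e)).of_mul_left q
  have e4 : j ≡ j' [MOD m] := Nat.ModEq.cancel_right_of_coprime (hc.pow_right 2) e3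
  exact e4.eq_of_lt_of_lt hj hj'

/-- The sum of the floors `⌊(h·𝔤₁ + i·𝔤₂ + j·𝔤₃ + k·𝔤₄)/𝔤₀⌋` over all four-tuples
`(h,i,j,k)` with `0 ≤ h ≤ 1`, `0 ≤ i ≤ q₀−1`, `0 ≤ j ≤ q−2q₀`, `0 ≤ k ≤ q₀−1`
equals `(q³ − 2q² + q)/2`. -/
theorem stmt_1 (s : ℕ) (hs : 1 ≤ s) (q₀ q g₀ g₁ g₂ g₃ g₄ : ℕ)
    (hq₀ : q₀ = 2 ^ s) (hq : q = 2 * q₀ ^ 2)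
    (hg₀ : g₀ = q ^ 2 - 2 * q₀ * q + q) (hg₁ : g₁ = q ^ 2 - q₀ * q + q₀)
    (hg₂ : g₂ = q ^ 2 - q + 2 * q₀) (hg₃ : g₃ = q ^ 2) (hg₄ : g₄ = q ^ 2 + 1) :
    ∑ h ∈ Finset.range 2, ∑ i ∈ Finset.range q₀,
      ∑ j ∈ Finset.range (q - 2 * q₀ + 1), ∑ k ∈ Finset.range q₀,
        (h * g₁ + i * g₂ + j * g₃ + k * g₄) / g₀ = (q ^ 3 - 2 * q ^ 2 + q) / 2 := by
  have ha2 : 2 ≤ q₀ := by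
    rw [hq₀]; calc 2 = 2 ^ 1 := rfl
      _ ≤ 2 ^ s := Nat.pow_le_pow_right (by norm_num) hs
  have hqa : 2 * q₀ ≤ q := by rw [hq]; nlinarith
  obtain ⟨m, hm⟩ : ∃ m, m = q - 2 * q₀ + 1 := ⟨_, rfl⟩
  have hmz : (m : ℤ) = q - 2 * q₀ + 1 := by rw [hm]; push_cast [hqa]; ring
  rw [← hm]
  have hc : Nat.Coprime m q := by
    have h2 : Nat.Coprime m 2 := by
      rw [Nat.coprime_two_right]
      exact ⟨q₀ ^ 2 - q₀, by
        have : q₀ ≤ q₀ ^ 2 := by nlinarith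
        omega⟩
    have h3 : Nat.Coprime m q₀ := by rw [hq₀]; exact h2.pow_right s
    rw [hq]; exact h2.mul_right (h3.pow_right 2)
  have hg0 : g₀ = q * m := by
    have : 2 * q₀ * q ≤ q ^ 2 := by nlinarith
    zify
    rw [hg₀, hmz]; push_cast [this]; ring
  obtain ⟨X, hX⟩ : ∃ X, X = q - q₀ := ⟨_, rfl⟩
  obtain ⟨Y, hY⟩ : ∃ Y, Y = q - 1 := ⟨_, rfl⟩
  have hXz : (X : ℤ) = q - q₀ := by rw [hX]; push_cast [show q₀ ≤ q by omega]; ring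
  have hYz : (Y : ℤ) = q - 1 := by rw [hY]; push_cast [show 1 ≤ q by omega]; ring
  have h1 : g₁ = q * X + q₀ := by
    have : q₀ * q ≤ q ^ 2 := by nlinarith
    zify
    rw [hg₁, hXz]; push_cast [this]; ring
  have h2 : g₂ = q * Y + 2 * q₀ := by
    have : q ≤ q ^ 2 := by nlinarith
    zify
    rw [hg₂, hYz]; push_cast [this]; ring
  have hres : ∑ h ∈ Finset.range 2, ∑ i ∈ Finset.range q₀,
      ∑ j ∈ Finset.range m, ∑ k ∈ Finset.range q₀,
        (h * g₁ + i * g₂ + j * g₃ + k * g₄) % g₀ = ∑ r ∈ Finset.range g₀, r := by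
    let S := Finset.range 2 ×ˢ Finset.range q₀ ×ˢ Finset.range m ×ˢ Finset.range q₀
    let f : ℕ × ℕ × ℕ × ℕ → ℕ := fun x =>
      (x.1 * g₁ + x.2.1 * g₂ + x.2.2.1 * g₃ + x.2.2.2 * g₄) % g₀
    have hinj : Set.InjOn f S := by
      rintro ⟨h, i, j, k⟩ hx ⟨h', i', j', k'⟩ hx' e
      simp only [S, Finset.coe_product, Set.mem_prod, Finset.mem_coe, Finset.mem_range] at hx hx'
      obtain ⟨a1, a2, a3, a4⟩ := hx
      obtain ⟨b1, b2, b3, b4⟩ := hx'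
      simp only [f, hg0, hg₃] at e
      obtain ⟨c1, c2, c3, c4⟩ := aux_inj q₀ q m g₁ g₂ g₄ X Y (by omega) hq hc h1 h2 hg₄
        h i j k h' i' j' k' a1 a2 a3 a4 b1 b2 b3 b4 e
      rw [c1, c2, c3, c4]
    have hg0pos : 0 < g₀ := by
      rw [hg0]; exact Nat.mul_pos (by omega) (by omega)
    have himg : S.image f = Finset.range g₀ := by
      apply Finset.eq_of_subset_of_card_le
      · intro r hr
        obtain ⟨x, -, rfl⟩ := Finset.mem_image.1 hr
        exact Finset.mem_range.2 (Nat.mod_lt _ hg0pos)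
      · rw [Finset.card_image_of_injOn hinj]
        simp only [S, Finset.card_product, Finset.card_range]
        rw [hg0, hq]; apply le_of_eq; ring
    rw [← himg, Finset.sum_image hinj]
    simp only [S, Finset.sum_product, f]
  have hsum : g₀ * (∑ h ∈ Finset.range 2, ∑ i ∈ Finset.range q₀,
      ∑ j ∈ Finset.range m, ∑ k ∈ Finset.range q₀,
        (h * g₁ + i * g₂ + j * g₃ + k * g₄) / g₀) + ∑ r ∈ Finset.range g₀, r =
      ∑ h ∈ Finset.range 2, ∑ i ∈ Finset.range q₀,
      ∑ j ∈ Finset.range m, ∑ k ∈ Finset.range q₀,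
        (h * g₁ + i * g₂ + j * g₃ + k * g₄) := by
    rw [← hres]
    simp only [Finset.mul_sum, ← Finset.sum_add_distrib, Nat.div_add_mod]
  generalize (∑ h ∈ Finset.range 2, ∑ i ∈ Finset.range q₀,
      ∑ j ∈ Finset.range m, ∑ k ∈ Finset.range q₀,
        (h * g₁ + i * g₂ + j * g₃ + k * g₄) / g₀) = T at hsum ⊢
  have G0 := aux_gauss g₀
  have Ga := aux_gauss q₀
  have Gm := aux_gauss m
  zify at hsum
  simp only [Finset.sum_add_distrib, Finset.sum_const, Finset.card_range, ← Finset.sum_mul,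
    ← Finset.mul_sum, nsmul_eq_mul, Finset.sum_range_succ, Finset.sum_range_zero] at hsum
  generalize ∑ i ∈ Finset.range g₀, (i : ℤ) = s0 at *
  generalize ∑ i ∈ Finset.range q₀, (i : ℤ) = sa at *
  generalize ∑ i ∈ Finset.range m, (i : ℤ) = sm at *
  push_cast at hsum
  have z0 : (g₀ : ℤ) = q * m := by exact_mod_cast hg0
  have z1 : (g₁ : ℤ) = q * X + q₀ := by exact_mod_cast h1
  have z2 : (g₂ : ℤ) = q * Y + 2 * q₀ := by exact_mod_cast h2
  have z3 : (g₃ : ℤ) = q ^ 2 := by exact_mod_cast hg₃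
  have z4 : (g₄ : ℤ) = q ^ 2 + 1 := by exact_mod_cast hg₄
  have zq : (q : ℤ) = 2 * q₀ ^ 2 := by exact_mod_cast hq
  have hne : (g₀ : ℤ) ≠ 0 := by
    rw [z0]; have : 0 < q := by omega
    have : 0 < m := by omega
    positivity
  have hT : (2 * T : ℤ) = q ^ 3 - 2 * q ^ 2 + q := by
    apply mul_left_cancel₀ hne
    have e : (g₀ : ℤ) * (2 * T) = 2 * (g₀ * T + s0) - 2 * s0 := by ring
    rw [e, hsum, G0]
    have e' : ∀ A : ℤ, A - (g₀ : ℤ) * (q ^ 3 - 2 * q ^ 2 + q) = 0 →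
        A = g₀ * ((q : ℤ) ^ 3 - 2 * q ^ 2 + q) := fun A h => by linarith
    apply e'
    have e2 : 2 * ((q₀ : ℤ) * (m * (q₀ * g₁))) + (m * q₀ * 2 * (g₂ + g₄)) * (q₀ * (q₀ - 1))
        + 2 * q₀ ^ 2 * g₃ * (m * (m - 1)) - g₀ * (g₀ - 1)
        - g₀ * ((q : ℤ) ^ 3 - 2 * q ^ 2 + q) = 0 := by
      rw [z0, z1, z2, z3, z4, hXz, hYz, hmz, zq]; ring
    linear_combination e2 + (m * q₀ * 2 * (g₂ + g₄) : ℤ) * Ga + (2 * q₀ ^ 2 * g₃ : ℤ) * Gm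
  have : q ^ 3 - 2 * q ^ 2 + q = 2 * T := by
    have : 2 * q ^ 2 ≤ q ^ 3 := by
      rw [pow_succ q 2, mul_comm]; exact Nat.mul_le_mul_left _ (by omega)
    zify
    push_cast [this]
    linarith
  omega
end

section
/- Let s ≥ 1 be an integer, q₀ = 2^s and q = 2q₀². Let H be the numerical semigroup (additive submonoid of ℕ containing 0) generated by the five elements q² − 2q₀q + q, q² − q₀q + q₀, q² − q + 2q₀, q², q² + 1. Then H has exactly (q³ − 2q² + q)/2 gaps, i.e. the complement ℕ \ H has cardinality (q³ − 2q² + q)/2. -/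
/-- The gluing `d A + c ℕ`. -/
def glueM (A : AddSubmonoid ℕ) (d c : ℕ) : AddSubmonoid ℕ where
  carrier := {n | ∃ a ∈ A, ∃ b, n = d * a + c * b}
  zero_mem' := ⟨0, A.zero_mem, 0, by simp⟩
  add_mem' := by
    rintro x y ⟨a, ha, b, rfl⟩ ⟨a', ha', b', rfl⟩
    exact ⟨a + a', A.add_mem ha ha', b + b', by ring⟩

theorem mem_glueM (A : AddSubmonoid ℕ) (d c n : ℕ) :
    n ∈ glueM A d c ↔ ∃ a ∈ A, ∃ b, n = d * a + c * b := Iff.rfl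

theorem mem_glue_iff (A : AddSubmonoid ℕ) (d c : ℕ) (hcop : Nat.Coprime c d)
    (hc : c ∈ A) (n b : ℕ) (k : ℤ) (hb : b < d) (h : (n : ℤ) = c * b + d * k) :
    n ∈ glueM A d c ↔ ∃ a ∈ A, k = (a : ℤ) := by
  rw [mem_glueM]
  constructor
  · rintro ⟨a, ha, b', rfl⟩
    have hm : (c * b') ≡ c * b [MOD d] := by
      rw [← Int.natCast_modEq_iff, Int.modEq_iff_dvd]
      refine ⟨a - k, ?_⟩
      push_cast at h ⊢
      linarith
    have hm2 : b' ≡ b [MOD d] :=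
      Nat.ModEq.cancel_left_of_coprime (by rwa [Nat.gcd_comm]) hm
    have hb' : b' % d = b := by
      rw [hm2, Nat.mod_eq_of_lt hb]
    have hdv := Nat.div_add_mod b' d
    rw [hb'] at hdv
    refine ⟨a + (b' / d) * c, A.add_mem ha (by
      simpa using A.nsmul_mem hc (b' / d)), ?_⟩
    generalize b' / d = t at hdv ⊢
    subst hdv
    have hd0 : (d : ℤ) ≠ 0 := by omega
    apply mul_left_cancel₀ hd0
    push_cast at h ⊢
    linarith
  · rintro ⟨a, ha, rfl⟩
    exact ⟨a, ha, b, by zify; linarith⟩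

theorem sum_floor (c d : ℕ) (hd : 0 < d) (hc : 0 < c) (hcop : Nat.Coprime c d) :
    2 * ∑ b ∈ Finset.range d, (c * b / d) = (d - 1) * (c - 1) := by
  obtain ⟨e, rfl⟩ : ∃ e, d = e + 1 := ⟨d - 1, by omega⟩
  rw [Finset.sum_range_succ', two_mul]
  simp only [mul_zero, Nat.zero_div, add_zero]
  nth_rewrite 1 [← Finset.sum_range_reflect]
  rw [← Finset.sum_add_distrib]
  rw [Finset.sum_congr rfl (g := fun _ => c - 1)]
  · simp
  · intro i hi
    rw [Finset.mem_range] at hi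
    obtain ⟨j, rfl⟩ : ∃ j, e = i + 1 + j := ⟨e - (i + 1), by omega⟩
    have e1 : i + 1 + j - 1 - i + 1 = j + 1 := by omega
    rw [e1]
    set D := i + 1 + j + 1 with hD
    have n1 : ¬ D ∣ c * (i + 1) := by
      intro h
      have := Nat.le_of_dvd (by omega) (hcop.symm.dvd_of_dvd_mul_left h)
      omega
    have hs : c * (j + 1) + c * (i + 1) = c * D := by rw [hD]; ring
    have m1 := Nat.div_add_mod (c * (i + 1)) D
    have m2 := Nat.div_add_mod (c * (j + 1)) D
    have l1 := Nat.mod_lt (c * (i + 1)) hd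
    have l2 := Nat.mod_lt (c * (j + 1)) hd
    have p1 : 0 < (c * (i + 1)) % D := Nat.pos_of_ne_zero fun h => n1 (Nat.dvd_of_mod_eq_zero h)
    generalize (c * (i + 1)) % D = r1 at *
    generalize (c * (j + 1)) % D = r2 at *
    generalize (c * (i + 1)) / D = x at *
    generalize (c * (j + 1)) / D = y at *
    have key : D * (x + y) + (r1 + r2) = D * c := by linarith
    have u : x + y < c := by
      by_contra hh
      push Not at hh
      have := Nat.mul_le_mul_left D hh
      omega
    have v : c < x + y + 2 := by
      by_contra hh
      push Not at hh
      have := Nat.mul_le_mul_left D hh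
      rw [mul_add] at this
      omega
    omega

theorem glue_gaps (A : AddSubmonoid ℕ) (d c : ℕ) (hd : 0 < d) (hc0 : 0 < c)
    (hcop : Nat.Coprime c d) (hc : c ∈ A) (G : Finset ℕ) (hG : ∀ n, n ∈ G ↔ n ∉ A) :
    ∃ G' : Finset ℕ, (∀ n, n ∈ G' ↔ n ∉ glueM A d c) ∧
      2 * G'.card = 2 * d * G.card + (d - 1) * (c - 1) := by
  classical
  let F : ℕ → Finset ℤ := fun b => G.image (fun x : ℕ => (x : ℤ)) ∪ Finset.Ico (-((c * b / d : ℕ) : ℤ)) 0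
  let T : Finset (Σ _ : ℕ, ℤ) := (Finset.range d).sigma F
  let f : (Σ _ : ℕ, ℤ) → ℕ := fun p => ((c : ℤ) * p.1 + d * p.2).toNat
  have hF : ∀ b k, k ∈ F b ↔ (0 ≤ (c : ℤ) * b + d * k ∧ ¬ ∃ a ∈ A, k = (a : ℤ)) := by
    intro b k
    simp only [F, Finset.mem_union, Finset.mem_image, Finset.mem_Ico]
    have hle : -((c * b / d : ℕ) : ℤ) ≤ k ↔ 0 ≤ (c : ℤ) * b + d * k := by
      push_cast
      rw [neg_le, Int.le_ediv_iff_mul_le (by omega)]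
      constructor <;> intro h <;> linarith
    rw [hle]
    constructor
    · rintro (⟨x, hx, rfl⟩ | ⟨h1, h2⟩)
      · refine ⟨by positivity, ?_⟩
        rintro ⟨a, ha, h⟩
        have : x = a := by exact_mod_cast h
        exact (hG x).1 hx (this ▸ ha)
      · refine ⟨h1, ?_⟩
        rintro ⟨a, ha, h⟩
        omega
    · rintro ⟨h1, h2⟩
      rcases lt_or_ge k 0 with h | h
      · exact Or.inr ⟨h1, h⟩
      · left
        refine ⟨k.toNat, (hG _).2 fun hk => h2 ⟨_, hk, by omega⟩, by omega⟩
  have hfT : ∀ p ∈ T, ((f p : ℕ) : ℤ) = c * p.1 + d * p.2 := by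
    rintro ⟨b, k⟩ hp
    rw [Finset.mem_sigma] at hp
    exact Int.toNat_of_nonneg ((hF b k).1 hp.2).1
  have hinj : Set.InjOn f T := by
    rintro ⟨b, k⟩ hp ⟨b', k'⟩ hp' h
    have e1 := hfT _ hp
    have e2 := hfT _ hp'
    rw [h, e2] at e1
    have hb := Finset.mem_range.1 (Finset.mem_sigma.1 hp).1
    have hb' := Finset.mem_range.1 (Finset.mem_sigma.1 hp').1
    simp only at e1 hb hb'
    have hm : (c * b') ≡ c * b [MOD d] := by
      rw [← Int.natCast_modEq_iff, Int.modEq_iff_dvd]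
      refine ⟨k' - k, ?_⟩
      push_cast
      linarith
    have hm2 : b' ≡ b [MOD d] :=
      Nat.ModEq.cancel_left_of_coprime (by rwa [Nat.gcd_comm]) hm
    have hbb : b' = b := Nat.ModEq.eq_of_lt_of_lt hm2 hb' hb
    subst hbb
    have hd0 : (d : ℤ) ≠ 0 := by omega
    have : k = k' := by
      apply mul_left_cancel₀ hd0
      linarith
    rw [this]
  refine ⟨T.image f, ?_, ?_⟩
  · intro n
    rw [Finset.mem_image]
    constructor
    · rintro ⟨⟨b, k⟩, hp, rfl⟩
      have e := hfT _ hp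
      rw [Finset.mem_sigma] at hp
      rw [mem_glue_iff A d c hcop hc _ b k (Finset.mem_range.1 hp.1) e]
      exact ((hF b k).1 hp.2).2
    · intro hn
      obtain ⟨b, hb, hbn⟩ : ∃ b, b < d ∧ c * b ≡ n [MOD d] := by
        obtain ⟨u, hu⟩ := Nat.exists_mul_mod_eq_of_coprime n hcop (by omega)
        exact ⟨u, hu.1, hu.2⟩
      rw [← Int.natCast_modEq_iff, Int.modEq_iff_dvd] at hbn
      obtain ⟨k, hk⟩ := hbn
      have e : (n : ℤ) = c * b + d * k := by push_cast at hk; linarith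
      rw [mem_glue_iff A d c hcop hc n b k hb e] at hn
      refine ⟨⟨b, k⟩, Finset.mem_sigma.2 ⟨Finset.mem_range.2 hb, (hF b k).2 ⟨by omega, hn⟩⟩, ?_⟩
      simp only [f]
      omega
  · rw [Finset.card_image_of_injOn hinj, Finset.card_sigma]
    have hcard : ∀ b, (F b).card = G.card + c * b / d := by
      intro b
      simp only [F]
      rw [Finset.card_union_of_disjoint, Finset.card_image_of_injective _ Nat.cast_injective]
      · rw [Int.card_Ico]
        generalize c * b / d = z
        omega
      · rw [Finset.disjoint_left]
        intro x hx hx'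
        obtain ⟨y, _, rfl⟩ := Finset.mem_image.1 hx
        have := (Finset.mem_Ico.1 hx').2
        omega
    simp only [hcard]
    rw [Finset.sum_add_distrib, mul_add, sum_floor c d hd hc0 hcop]
    simp [mul_assoc]

/-- The numerical semigroup generated by `q² − 2q₀q + q`, `q² − q₀q + q₀`,
`q² − q + 2q₀`, `q²`, `q² + 1` has exactly `(q³ − 2q² + q)/2` gaps. -/
theorem stmt_2 (s : ℕ) (hs : 1 ≤ s) (q₀ q : ℕ)
    (hq₀ : q₀ = 2 ^ s) (hq : q = 2 * q₀ ^ 2)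
    (H : AddSubmonoid ℕ)
    (hH : H = AddSubmonoid.closure
      {q ^ 2 - 2 * q₀ * q + q, q ^ 2 - q₀ * q + q₀, q ^ 2 - q + 2 * q₀, q ^ 2, q ^ 2 + 1}) :
    {n : ℕ | n ∉ H}.ncard = (q ^ 3 - 2 * q ^ 2 + q) / 2 := by
  have h2 : 2 ≤ q₀ := by
    rw [hq₀]
    calc 2 = 2 ^ 1 := rfl
      _ ≤ 2 ^ s := Nat.pow_le_pow_right (by norm_num) hs
  clear hq₀ hs
  obtain ⟨r, rfl⟩ : ∃ r, q₀ = r + 1 := ⟨q₀ - 1, by omega⟩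
  -- m = q - 2 q₀ + 1
  obtain ⟨m, hm⟩ : ∃ m, m = 2 * r ^ 2 + 2 * r + 1 := ⟨_, rfl⟩
  have g0 : q ^ 2 - 2 * (r + 1) * q + q = m * q := by
    have a : q ^ 2 + q = m * q + 2 * (r + 1) * q := by subst hm hq; ring
    have b : 2 * (r + 1) * q ≤ q ^ 2 := by subst hq; nlinarith [Nat.zero_le r, Nat.zero_le (r^2), Nat.zero_le (r^3), Nat.zero_le (r^4)]
    omega
  have g1 : q ^ 2 - (r + 1) * q + (r + 1) = m * (q + (r + 1)) := by
    have a : q ^ 2 + (r + 1) = m * (q + (r + 1)) + (r + 1) * q := by subst hm hq; ring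
    have b : (r + 1) * q ≤ q ^ 2 := by subst hq; nlinarith [Nat.zero_le r, Nat.zero_le (r^2), Nat.zero_le (r^3), Nat.zero_le (r^4)]
    omega
  have g2 : q ^ 2 - q + 2 * (r + 1) = m * (q + 2 * (r + 1)) := by
    have a : q ^ 2 + 2 * (r + 1) = m * (q + 2 * (r + 1)) + q := by subst hm hq; ring
    have b : q ≤ q ^ 2 := by nlinarith [sq_nonneg r]
    omega
  have g4 : q ^ 2 + 1 = m * (q + 2 * (r + 1) + 1) := by subst hm hq; ring
  rw [g0, g1, g2] at hH
  have hq0 : 0 < q := by subst hq; positivity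
  obtain ⟨G1, hG1, c1⟩ := glue_gaps ⊤ (r + 1) (r + 2) (by omega) (by omega)
    (by simp [show r + 2 = (r + 1) + 1 from rfl]) trivial ∅ (by simp)
  obtain ⟨G2, hG2, c2⟩ := glue_gaps (glueM ⊤ (r + 1) (r + 2)) 2 (2 * (r + 1) + 1) (by omega) (by omega)
    (by simp) (⟨1, trivial, 1, by ring⟩) G1 hG1
  obtain ⟨G3, hG3, c3⟩ := glue_gaps (glueM (glueM ⊤ (r + 1) (r + 2)) 2 (2 * (r + 1) + 1)) (r + 1) (q + 2 * (r + 1) + 1) (by omega) (by omega)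
    (by
      have : q + 2 * (r + 1) + 1 = 1 + (r + 1) * (2 * (r + 1) + 2) := by subst hq; ring
      rw [this]; simp)
    (⟨(r + 1) * (r + 1), ⟨r + 1, trivial, 0, by ring⟩, 1, by subst hq; ring⟩) G2 hG2
  obtain ⟨G4, hG4, c4⟩ := glue_gaps (glueM (glueM (glueM ⊤ (r + 1) (r + 2)) 2 (2 * (r + 1) + 1))
      (r + 1) (q + 2 * (r + 1) + 1)) m (q ^ 2) (by omega) (by positivity)
    (by
      rw [Nat.coprime_iff_gcd_eq_one]
      have h1 : Nat.gcd (q ^ 2) m ∣ q ^ 2 + 1 := (Nat.gcd_dvd_right _ _).trans ⟨_, g4⟩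
      exact Nat.dvd_one.1 ((Nat.dvd_add_right (Nat.gcd_dvd_left _ _)).1 h1))
    (⟨2 * ((r + 1) * q), ⟨(r + 1) * q, ⟨q, trivial, 0, by ring⟩, 0, by ring⟩, 0,
      by subst hq; ring⟩) G3 hG3
  have hHe : ∀ n, n ∈ G4 ↔ n ∉ H := by
    intro n
    rw [hG4, hH]
    refine not_congr ⟨?_, fun h => ?_⟩
    · rintro ⟨_, ⟨_, ⟨_, ⟨a, -, b, rfl⟩, c, rfl⟩, e, rfl⟩, f, rfl⟩
      have mem : ∀ k x, x ∈ ({m * q, m * (q + (r + 1)), m * (q + 2 * (r + 1)), q ^ 2, q ^ 2 + 1} : Set ℕ) →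
          k * x ∈ AddSubmonoid.closure ({m * q, m * (q + (r + 1)), m * (q + 2 * (r + 1)), q ^ 2, q ^ 2 + 1} : Set ℕ) := by
        intro k x hx
        simpa using AddSubmonoid.nsmul_mem _ (AddSubmonoid.subset_closure hx) k
      have := add_mem (add_mem (add_mem (add_mem (mem a (m * q) (by simp))
        (mem b (m * (q + 2 * (r + 1))) (by simp))) (mem c (m * (q + (r + 1))) (by simp)))
        (mem e (q ^ 2 + 1) (by simp))) (mem f (q ^ 2) (by simp))
      convert this using 1
      rw [g4]
      subst hq
      ring
    · revert h
      apply AddSubmonoid.closure_le.2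
      rintro x (rfl | rfl | rfl | rfl | rfl)
      · exact ⟨_, ⟨_, ⟨_, ⟨1, trivial, 0, rfl⟩, 0, rfl⟩, 0, rfl⟩, 0, by subst hq; ring⟩
      · exact ⟨_, ⟨_, ⟨_, ⟨0, trivial, 0, rfl⟩, 1, rfl⟩, 0, rfl⟩, 0, by subst hq; ring⟩
      · exact ⟨_, ⟨_, ⟨_, ⟨0, trivial, 1, rfl⟩, 0, rfl⟩, 0, rfl⟩, 0, by subst hq; ring⟩
      · exact ⟨_, ⟨_, ⟨_, ⟨0, trivial, 0, rfl⟩, 0, rfl⟩, 0, rfl⟩, 1, by ring⟩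
      · exact ⟨_, ⟨_, ⟨_, ⟨0, trivial, 0, rfl⟩, 0, rfl⟩, 1, rfl⟩, 0, by rw [g4]; ring⟩
  have hset : {n : ℕ | n ∉ H} = (G4 : Set ℕ) := by
    ext n; simp [hHe]
  rw [hset, Set.ncard_coe_finset]
  have hsub : q ^ 3 - 2 * q ^ 2 + q = 2 * G4.card := by
    obtain ⟨p, rfl⟩ : ∃ p, q = p + 1 := ⟨q - 1, by omega⟩
    have hp1 : 1 ≤ p := by nlinarith
    have hle : 2 * (p + 1) ^ 2 ≤ (p + 1) ^ 3 := by nlinarith [sq_nonneg (p + 1)]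
    have hq2 : (p + 1) ^ 2 - 1 = p ^ 2 + 2 * p := by
      have : (p + 1) ^ 2 = p ^ 2 + 2 * p + 1 := by ring
      omega
    have hm1 : m - 1 = 2 * r ^ 2 + 2 * r := by omega
    rw [hq2, hm1] at c4
    simp only [Finset.card_empty, mul_zero, zero_add, Nat.add_sub_cancel,
      show r + 2 - 1 = r + 1 from rfl, show 2 - 1 = 1 from rfl] at c1 c2 c3
    zify [hle] at *
    have hp : (p : ℤ) = 2 * (r + 1) ^ 2 - 1 := by linarith
    rw [hm] at c4
    rw [hp] at c3 c4 ⊢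
    have k2 : (G2.card : ℤ) = (r + 1) ^ 2 := by linarith
    rw [k2] at c3
    linear_combination -c4 - (2 * (r : ℤ) ^ 2 + 2 * r + 1) * c3
  rw [hsub]
  omega
end

section
/- Let s ≥ 1 be an integer, q₀ = 2^s and q = 2q₀². Let H be the numerical semigroup generated by 𝔤₀ = q² − 2q₀q + q, 𝔤₁ = q² − q₀q + q₀, 𝔤₂ = q² − q + 2q₀, 𝔤₃ = q², 𝔤₄ = q² + 1. Then the Apéry set Ap(H) = { z ∈ H : z − 𝔤₀ ∉ H } (where z − 𝔤₀ is regarded as an integer, so negative values are not in H) is exactly the set A = { h·𝔤₁ + i·𝔤₂ + j·𝔤₃ + k·𝔤₄ : 0 ≤ h ≤ 1, 0 ≤ i ≤ q₀−1, 0 ≤ j ≤ q−2q₀, 0 ≤ k ≤ q₀−1 }. -/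
/-- The Apéry set `Ap(H) = { z ∈ H : z − 𝔤₀ ∉ H }` of the numerical semigroup `H`
generated by `𝔤₀, 𝔤₁, 𝔤₂, 𝔤₃, 𝔤₄` equals
`A = { h·𝔤₁ + i·𝔤₂ + j·𝔤₃ + k·𝔤₄ : 0 ≤ h ≤ 1, 0 ≤ i ≤ q₀−1, 0 ≤ j ≤ q−2q₀, 0 ≤ k ≤ q₀−1 }`.
Here `z − 𝔤₀ ∉ H` (with `z − 𝔤₀` regarded as an integer) is expressed as
`¬ ∃ w ∈ H, z = w + 𝔤₀`. -/
theorem stmt_3 (s : ℕ) (hs : 1 ≤ s) (q₀ q g₀ g₁ g₂ g₃ g₄ : ℕ)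
    (hq₀ : q₀ = 2 ^ s) (hq : q = 2 * q₀ ^ 2)
    (hg₀ : g₀ = q ^ 2 - 2 * q₀ * q + q) (hg₁ : g₁ = q ^ 2 - q₀ * q + q₀)
    (hg₂ : g₂ = q ^ 2 - q + 2 * q₀) (hg₃ : g₃ = q ^ 2) (hg₄ : g₄ = q ^ 2 + 1)
    (H : AddSubmonoid ℕ)
    (hH : H = AddSubmonoid.closure {g₀, g₁, g₂, g₃, g₄}) :
    {z : ℕ | z ∈ H ∧ ¬ ∃ w : ℕ, w ∈ H ∧ z = w + g₀} =
      {a : ℕ | ∃ h i j k : ℕ, h ≤ 1 ∧ i + 1 ≤ q₀ ∧ j ≤ q - 2 * q₀ ∧ k + 1 ≤ q₀ ∧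
        a = h * g₁ + i * g₂ + j * g₃ + k * g₄} := by
  have h2 : 1 ≤ q₀ := by rw [hq₀]; exact Nat.one_le_two_pow
  obtain ⟨m, hm⟩ : ∃ m, q = m + 2 * q₀ := ⟨q - 2 * q₀, by
    have : 2 * q₀ ≤ q := by rw [hq]; nlinarith
    omega⟩
  have hmq : q - 2 * q₀ = m := by omega
  rw [hmq]
  have e0 : g₀ + 2 * q₀ * q = q ^ 2 + q := by
    have : 2 * q₀ * q ≤ q ^ 2 := by nlinarith
    omega
  have e1 : g₁ + q₀ * q = q ^ 2 + q₀ := by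
    have : q₀ * q ≤ q ^ 2 := by nlinarith
    omega
  have e2 : g₂ + q = q ^ 2 + 2 * q₀ := by
    have : q ≤ q ^ 2 := by nlinarith
    omega
  clear hg₀ hg₁ hg₂ hs hq₀
  have f0 : g₀ = 2 * (q₀ * ((m + 1) * q₀)) := by zify at *; linear_combination e0 + (q + 1 - 2 * q₀) * hq + 2 * q₀ ^ 2 * hm
  have r1 : 2 * g₁ = g₀ + g₂ := by zify at *; linear_combination 2 * e1 - e0 - e2
  have r2 : q₀ * g₂ = (q₀ + 1) * g₀ := by
    zify at *; linear_combination q₀ * e2 - (q₀ + 1) * e0 + (-q - 1) * hq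
  have r4 : q₀ * g₄ = g₁ + q₀ * g₀ := by
    zify at *; linear_combination q₀ * hg₄ - e1 - q₀ * e0 - q * hq
  have r3 : (m + 1) * g₃ = q * g₀ := by
    zify at *; linear_combination (m + 1) * hg₃ - q * e0 - q ^ 2 * hm
  have hpos : 0 < g₀ := by rw [f0]; positivity
  clear e0 e1 e2 hmq
  let B : ℕ → Prop := fun z => ∃ n h i j k : ℕ, h ≤ 1 ∧ i + 1 ≤ q₀ ∧ j ≤ m ∧ k + 1 ≤ q₀ ∧
        z = n * g₀ + (h * g₁ + i * g₂ + j * g₃ + k * g₄)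
  have b0 : ∀ z c, B z → B (z + c * g₀) := by
    rintro z c ⟨n, h, i, j, k, hh, hi, hj, hk, rfl⟩
    exact ⟨n + c, h, i, j, k, hh, hi, hj, hk, by ring⟩
  have b2 : ∀ z, B z → B (z + g₂) := by
    rintro z ⟨n, h, i, j, k, hh, hi, hj, hk, rfl⟩
    rcases Nat.lt_or_ge (i + 1) q₀ with hc | hc
    · exact ⟨n, h, i + 1, j, k, hh, hc, hj, hk, by ring⟩
    · have : q₀ = i + 1 := by omega
      refine ⟨n + q₀ + 1, h, 0, j, k, hh, h2, hj, hk, ?_⟩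
      have r2' : (i + 1) * g₂ = (q₀ + 1) * g₀ := by rw [← this]; exact r2
      linarith
  have b1 : ∀ z, B z → B (z + g₁) := by
    rintro z ⟨n, h, i, j, k, hh, hi, hj, hk, rfl⟩
    rcases Nat.lt_or_ge h 1 with hc | hc
    · exact ⟨n, h + 1, i, j, k, hc, hi, hj, hk, by ring⟩
    · have : h = 1 := by omega
      subst this
      have := b2 _ ⟨n + 1, 0, i, j, k, by omega, hi, hj, hk, rfl⟩
      convert this using 1
      linarith
  have b3 : ∀ z, B z → B (z + g₃) := by
    rintro z ⟨n, h, i, j, k, hh, hi, hj, hk, rfl⟩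
    rcases Nat.lt_or_ge j m with hc | hc
    · exact ⟨n, h, i, j + 1, k, hh, hi, hc, hk, by ring⟩
    · have : m = j := by omega
      subst this
      exact ⟨n + q, h, i, 0, k, hh, hi, by omega, hk, by linarith⟩
  have b4 : ∀ z, B z → B (z + g₄) := by
    rintro z ⟨n, h, i, j, k, hh, hi, hj, hk, rfl⟩
    rcases Nat.lt_or_ge (k + 1) q₀ with hc | hc
    · exact ⟨n, h, i, j, k + 1, hh, hi, hj, hc, by ring⟩
    · have : q₀ = k + 1 := by omega
      have := b1 _ ⟨n + q₀, h, i, j, 0, hh, hi, hj, h2, rfl⟩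
      have r4' : (k + 1) * g₄ = g₁ + q₀ * g₀ := by rw [← ‹q₀ = k + 1›]; exact r4
      convert this using 1
      linarith
  have m0 : g₀ ∈ H := by rw [hH]; exact AddSubmonoid.subset_closure (by simp)
  have m1 : g₁ ∈ H := by rw [hH]; exact AddSubmonoid.subset_closure (by simp)
  have m2 : g₂ ∈ H := by rw [hH]; exact AddSubmonoid.subset_closure (by simp)
  have m3 : g₃ ∈ H := by rw [hH]; exact AddSubmonoid.subset_closure (by simp)
  have m4 : g₄ ∈ H := by rw [hH]; exact AddSubmonoid.subset_closure (by simp)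
  have HB : ∀ z ∈ H, B z := by
    intro z hz
    rw [hH] at hz
    induction hz using AddSubmonoid.closure_induction_right with
    | zero => exact ⟨0, 0, 0, 0, 0, by omega, h2, by omega, h2, by simp⟩
    | add_right x hx y hy ih =>
      simp only [Set.mem_insert_iff, Set.mem_singleton_iff] at hy
      rcases hy with rfl | rfl | rfl | rfl | rfl
      · simpa using b0 _ 1 ih
      · exact b1 _ ih
      · exact b2 _ ih
      · exact b3 _ ih
      · exact b4 _ ih
  have AH : ∀ n h i j k : ℕ, n * g₀ + (h * g₁ + i * g₂ + j * g₃ + k * g₄) ∈ H := by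
    intro n h i j k
    have M : ∀ c g : ℕ, g ∈ H → c * g ∈ H := fun c g hg => by
      simpa using H.nsmul_mem hg c
    exact H.add_mem (M _ _ m0) (H.add_mem (H.add_mem (H.add_mem (M _ _ m1) (M _ _ m2)) (M _ _ m3))
      (M _ _ m4))
  haveI : NeZero g₀ := ⟨hpos.ne'⟩
  let F : Fin 2 × Fin q₀ × Fin (m + 1) × Fin q₀ → ZMod g₀ := fun t =>
    ((t.1.1 * g₁ + t.2.1.1 * g₂ + t.2.2.1.1 * g₃ + t.2.2.2.1 * g₄ : ℕ) : ZMod g₀)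
  have Fs : Function.Surjective F := by
    intro c
    have hw := AH 0 0 0 ((g₀ - 1) * c.val) c.val
    obtain ⟨n, h, i, j, k, hh, hi, hj, hk, he⟩ := HB _ hw
    refine ⟨(⟨h, by omega⟩, ⟨i, by omega⟩, ⟨j, by omega⟩, ⟨k, by omega⟩), ?_⟩
    have h1 := congrArg (Nat.cast : ℕ → ZMod g₀) he
    obtain ⟨p, hp⟩ : ∃ p, g₀ = p + 1 := ⟨g₀ - 1, by omega⟩
    have h3 : (g₀ - 1) * c.val * g₃ + c.val * g₄ = g₀ * (c.val * g₃) + c.val := by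
      have : g₀ - 1 = p := by omega
      rw [this, hg₄, ← hg₃]
      nth_rewrite 3 [hp]
      ring
    have h4 : ((0 * g₀ + (0 * g₁ + 0 * g₂ + (g₀ - 1) * c.val * g₃ + c.val * g₄) : ℕ) : ZMod g₀) = c := by
      rw [show 0 * g₀ + (0 * g₁ + 0 * g₂ + (g₀ - 1) * c.val * g₃ + c.val * g₄)
        = g₀ * (c.val * g₃) + c.val by rw [← h3]; ring]
      simp
    rw [h4] at h1
    rw [h1]
    simp [F]
  have Fb : Function.Bijective F := by
    rw [Fintype.bijective_iff_surjective_and_card]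
    refine ⟨Fs, ?_⟩
    rw [ZMod.card]
    simpa using f0.symm
  ext z
  simp only [Set.mem_setOf_eq]
  constructor
  · rintro ⟨hz, hn⟩
    obtain ⟨n, h, i, j, k, hh, hi, hj, hk, he⟩ := HB _ hz
    refine ⟨h, i, j, k, hh, hi, hj, hk, ?_⟩
    rcases n with _ | n
    · simpa using he
    · exact absurd ⟨_, AH n h i j k, by rw [he]; ring⟩ hn
  · rintro ⟨h, i, j, k, hh, hi, hj, hk, rfl⟩
    refine ⟨by simpa using AH 0 h i j k, ?_⟩
    rintro ⟨w, hw, he⟩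
    obtain ⟨n, h', i', j', k', hh', hi', hj', hk', rfl⟩ := HB _ hw
    have h1 := congrArg (Nat.cast : ℕ → ZMod g₀) he
    have := @Fb.1 (⟨h, by omega⟩, ⟨i, by omega⟩, ⟨j, by omega⟩, ⟨k, by omega⟩)
      (⟨h', by omega⟩, ⟨i', by omega⟩, ⟨j', by omega⟩, ⟨k', by omega⟩) (by
        simp only [F]; rw [h1]; simp)
    simp only [Prod.mk.injEq, Fin.mk.injEq] at this
    obtain ⟨rfl, rfl, rfl, rfl⟩ := this
    have : 0 ≤ n * g₀ := Nat.zero_le _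
    omega
end

section
/- Let s ≥ 1 be an integer, q₀ = 2^s and q = 2q₀². Let H be the numerical semigroup generated by g₀ = q²−q+1, g₁ = q²−2q₀+1, g₂ = q²−q₀+1, g₃ = q², g₄ = q²+1, f_i = (i+1)q₀g₀ − i·g₄ − 1 for i = 0,…,2q₀−2, and h_j = (2j+1)q₀g₀ − j·g₄ − q₀ for j = 0,…,q₀−2. Let i be an integer with 0 ≤ i ≤ q(q−2)/2, and write i = lq + kq₀ + j with 0 ≤ j ≤ q₀−1, 0 ≤ k ≤ 2q₀−1 and l ≥ 0. Define φ₁(i) = l if j = 0 and k = 0; φ₁(i) = l + 1 + max{q − q₀(k + 2l + 2), 0} if j = 0 and k ≠ 0; φ₁(i) = l + 1 + max{q − q₀(⌈k/2⌉ + j + l + 1), 0} if j ≠ 0. Then φ₁(i)·g₀ + i belongs to H. -/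
/-- Lemma `lem:phi1`: if `0 ≤ i ≤ q(q−2)/2` is written as `i = lq + kq₀ + j` with
`0 ≤ j ≤ q₀−1`, `0 ≤ k ≤ 2q₀−1`, `l ≥ 0`, then `φ₁(i)·g₀ + i` belongs to the
numerical semigroup `H` generated by `g₀, g₁, g₂, g₃, g₄`, the `f_i` and the `h_j`.
Here `max{x − y, 0}` for naturals is truncated subtraction `x - y`, and
`⌈k/2⌉ = (k+1)/2`. -/
theorem stmt_5 (s : ℕ) (hs : 1 ≤ s) (q₀ q g₀ g₁ g₂ g₃ g₄ : ℕ)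
    (hq₀ : q₀ = 2 ^ s) (hq : q = 2 * q₀ ^ 2)
    (hg₀ : g₀ = q ^ 2 - q + 1) (hg₁ : g₁ = q ^ 2 - 2 * q₀ + 1)
    (hg₂ : g₂ = q ^ 2 - q₀ + 1) (hg₃ : g₃ = q ^ 2) (hg₄ : g₄ = q ^ 2 + 1)
    (H : AddSubmonoid ℕ)
    (hH : H = AddSubmonoid.closure
      ({g₀, g₁, g₂, g₃, g₄} ∪
        {x | ∃ i : ℕ, i + 2 ≤ 2 * q₀ ∧ x = (i + 1) * q₀ * g₀ - i * g₄ - 1} ∪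
        {x | ∃ j : ℕ, j + 2 ≤ q₀ ∧ x = (2 * j + 1) * q₀ * g₀ - j * g₄ - q₀})) :
    ∀ i l k j : ℕ, i ≤ q * (q - 2) / 2 → i = l * q + k * q₀ + j →
      j + 1 ≤ q₀ → k + 1 ≤ 2 * q₀ →
      (if j = 0 ∧ k = 0 then l
       else if j = 0 then l + 1 + (q - q₀ * (k + 2 * l + 2))
       else l + 1 + (q - q₀ * ((k + 1) / 2 + j + l + 1))) * g₀ + i ∈ H := by
  intro i l k j _ hi hj hk
  have h2 : 2 ≤ q₀ := by
    rw [hq₀]; calc 2 = 2 ^ 1 := rfl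
      _ ≤ 2 ^ s := Nat.pow_le_pow_right (by norm_num) hs
  have hqq : q₀ * 4 ≤ q * 2 := by rw [hq]; nlinarith
  have hq2 : q * 4 ≤ q ^ 2 := by nlinarith
  have e4 : g₄ = g₀ + q := by omega
  have e3 : g₃ + 1 = g₀ + q := by omega
  have e2 : g₂ + q₀ = g₀ + q := by omega
  have e1 : g₁ + 2 * q₀ = g₀ + q := by omega
  have h24 : g₄ ≤ 2 * g₀ := by omega
  have hq4 : q₀ ≤ g₄ := by omega
  have h14 : 1 ≤ g₄ := by omega
  have h2g : g₄ ≤ q₀ * g₀ := h24.trans (Nat.mul_le_mul_right _ h2)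
  have m0 : g₀ ∈ H := by rw [hH]; exact AddSubmonoid.subset_closure (by simp)
  have m1 : g₁ ∈ H := by rw [hH]; exact AddSubmonoid.subset_closure (by simp)
  have m2 : g₂ ∈ H := by rw [hH]; exact AddSubmonoid.subset_closure (by simp)
  have m3 : g₃ ∈ H := by rw [hH]; exact AddSubmonoid.subset_closure (by simp)
  have m4 : g₄ ∈ H := by rw [hH]; exact AddSubmonoid.subset_closure (by simp)
  have mf : ∀ t, t + 2 ≤ 2 * q₀ → ∃ x ∈ H, x + t * g₄ + 1 = (t + 1) * q₀ * g₀ := by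
    intro t ht
    refine ⟨(t + 1) * q₀ * g₀ - t * g₄ - 1, ?_, ?_⟩
    · rw [hH]; exact AddSubmonoid.subset_closure (Or.inl (Or.inr ⟨t, ht, rfl⟩))
    · have : (t + 1) * g₄ ≤ (t + 1) * q₀ * g₀ := by
        rw [mul_assoc]; exact Nat.mul_le_mul_left _ h2g
      rw [add_mul, one_mul] at this
      omega
  have mh : ∀ t, t + 2 ≤ q₀ → ∃ x ∈ H, x + t * g₄ + q₀ = (2 * t + 1) * q₀ * g₀ := by
    intro t ht
    refine ⟨(2 * t + 1) * q₀ * g₀ - t * g₄ - q₀, ?_, ?_⟩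
    · rw [hH]; exact AddSubmonoid.subset_closure (Or.inr ⟨t, ht, rfl⟩)
    · have : (2 * t + 1) * g₄ ≤ (2 * t + 1) * q₀ * g₀ := by
        rw [mul_assoc]; exact Nat.mul_le_mul_left _ h2g
      rw [add_mul, one_mul, mul_assoc] at this
      omega
  have comb : ∀ a b u w x y : ℕ, x ∈ H → y = a * g₁ + b * g₂ + u * g₃ + w * g₄ + x → y ∈ H := by
    intro a b u w x y hx hy
    rw [hy]
    have hm : ∀ (n : ℕ) {g : ℕ}, g ∈ H → n * g ∈ H := fun n g hg => by
      simpa using H.nsmul_mem hg n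
    exact H.add_mem (H.add_mem (H.add_mem (H.add_mem (hm a m1) (hm b m2)) (hm u m3)) (hm w m4)) hx
  have z : (0:ℕ) ∈ H := H.zero_mem
  clear hH hg₀ hg₁ hg₂ hg₃ hg₄ h24 h2g hq4 h14 m0 m1 m2 m3 m4 hq₀ hs hqq hq2
  split_ifs with c1 c2
  · obtain ⟨rfl, rfl⟩ := c1
    exact comb 0 0 0 l 0 _ z (by rw [hi, e4]; ring)
  · subst c2
    have hk0 : k ≠ 0 := fun h => c1 ⟨rfl, h⟩
    rcases Nat.le_total (2 * q₀) (k + 2 * l + 2) with hle | hle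
    · have : q - q₀ * (k + 2 * l + 2) = 0 := by
        apply Nat.sub_eq_zero_of_le; rw [hq]; nlinarith
      rw [this]
      obtain ⟨a, b, w, hab, hw⟩ : ∃ a b w : ℕ, 2 * a + b + k = 2 * q₀ ∧ a + b + w = l + 1 :=
        ⟨(2 * q₀ - k) / 2, (2 * q₀ - k) % 2, l + 1 - (2 * q₀ - k + 1) / 2, by omega, by omega⟩
      refine comb a b 0 w 0 _ z ?_
      zify at *
      linear_combination hi - a * e1 - b * e2 - w * e4 - (g₀ + q) * hw + q₀ * hab - hq
    · obtain ⟨r, hr⟩ := Nat.exists_eq_add_of_le hle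
      have : q - q₀ * (k + 2 * l + 2) = q₀ * r := by
        rw [hq, pow_two, mul_left_comm, hr, mul_add, Nat.add_sub_cancel_left]
      rw [this]
      rcases Nat.even_or_odd' r with ⟨t, rfl | rfl⟩
      · rcases t with _ | t
        · obtain ⟨a, b, w, hab, hw⟩ : ∃ a b w : ℕ, 2 * a + b + k = 2 * q₀ ∧ a + b + w = l + 1 :=
            ⟨(2 * q₀ - k) / 2, (2 * q₀ - k) % 2, l + 1 - (2 * q₀ - k + 1) / 2, by omega, by omega⟩
          refine comb a b 0 w 0 _ z ?_
          zify at *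
          linear_combination hi - a * e1 - b * e2 - w * e4 - (g₀ + q) * hw + q₀ * hab - hq
        · obtain ⟨x, hx, ex⟩ := mh t (by omega)
          obtain ⟨y, hy, ey⟩ := mh 0 (by omega)
          refine comb (l + 1 + t) 0 0 0 _ _ (H.add_mem hx hy) ?_
          clear mf mh comb
          zify at *
          linear_combination hi - (l + 1 + t) * e1 - ex - ey + t * e4 - q₀ * hr - hq
      · obtain ⟨x, hx, ex⟩ := mh t (by omega)
        refine comb (l + 1 + t) 0 0 0 _ _ hx ?_
        clear mf mh comb
        zify at *
        linear_combination hi - (l + 1 + t) * e1 - ex + t * e4 - q₀ * hr - hq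
  · obtain ⟨u, hu⟩ : ∃ u, j + (u + 1) = q₀ := ⟨q₀ - j - 1, by omega⟩
    obtain ⟨a, b, hab, hb⟩ : ∃ a b : ℕ, 2 * a + b + k + 1 = 2 * q₀ ∧ a + b + (k + 1) / 2 = q₀ :=
      ⟨(2 * q₀ - k - 1) / 2, (2 * q₀ - k - 1) % 2, by omega, by omega⟩
    generalize (k + 1) / 2 = c at *
    rcases Nat.le_total (2 * q₀) (c + j + l + 1) with hle | hle
    · have : q - q₀ * (c + j + l + 1) = 0 := by
        apply Nat.sub_eq_zero_of_le; rw [hq]; nlinarith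
      rw [this]
      obtain ⟨w, hw⟩ : ∃ w : ℕ, a + b + (u + 1) + w = l + 1 := ⟨l + 1 - (a + b + (u + 1)), by omega⟩
      refine comb a b (u + 1) w 0 _ z ?_
      clear mf mh comb
      zify at *
      linear_combination hi - a * e1 - b * e2 - (u + 1) * e3 - w * e4 - (g₀ + q) * hw + q₀ * hab + hu - hq
    · obtain ⟨r, hr⟩ := Nat.exists_eq_add_of_le hle
      have : q - q₀ * (c + j + l + 1) = q₀ * r := by
        rw [hq, pow_two, mul_left_comm, hr, mul_add, Nat.add_sub_cancel_left]
      rw [this]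
      rcases r with _ | t
      · obtain ⟨w, hw⟩ : ∃ w : ℕ, a + b + (u + 1) + w = l + 1 := ⟨l + 1 - (a + b + (u + 1)), by omega⟩
        refine comb a b (u + 1) w 0 _ z ?_
        clear mf mh comb
        zify at *
        linear_combination hi - a * e1 - b * e2 - (u + 1) * e3 - w * e4 - (g₀ + q) * hw + q₀ * hab + hu - hq
      · obtain ⟨x, hx, ex⟩ := mf t (by omega)
        have hw : a + b + u = l + 1 + t := by omega
        refine comb a b u 0 _ _ hx ?_
        clear mf mh comb
        zify at *
        linear_combination hi - a * e1 - b * e2 - u * e3 - ex + t * e4 - (g₀ + q) * hw + q₀ * hab + hu - hq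
end

section
/- Let s ≥ 1 be an integer, q₀ = 2^s and q = 2q₀². Let H be the numerical semigroup generated by g₀ = q²−q+1, g₁ = q²−2q₀+1, g₂ = q²−q₀+1, g₃ = q², g₄ = q²+1, f_i = (i+1)q₀g₀ − i·g₄ − 1 for i = 0,…,2q₀−2, and h_j = (2j+1)q₀g₀ − j·g₄ − q₀ for j = 0,…,q₀−2. Let i be an integer with q(q−2)/2 + 1 ≤ i ≤ g₀ − 1 = q² − q, set i′ = g₀ − 1 − i, and write i′ = lq + kq₀ + j with 0 ≤ j ≤ q₀−1, 0 ≤ k ≤ 2q₀−1 and l ≥ 0. Define φ₂(i) = q − l − 1 − max{q − q₀(k + 2l + 1), 0} if j = q₀−1, and φ₂(i) = q − l − 1 − max{q − q₀(⌈k/2⌉ + j + l + 1), 0} if j ≠ q₀−1. Then φ₂(i)·g₀ + i belongs to H. -/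
set_option maxHeartbeats 2000000 in
/-- Lemma `lem:phi2`: if `q(q−2)/2 + 1 ≤ i ≤ g₀ − 1 = q² − q` and
`i′ = g₀ − 1 − i = q² − q − i` is written as `i′ = lq + kq₀ + j` with
`0 ≤ j ≤ q₀−1`, `0 ≤ k ≤ 2q₀−1`, `l ≥ 0`, then `φ₂(i)·g₀ + i` belongs to the
numerical semigroup `H` generated by `g₀, g₁, g₂, g₃, g₄`, the `f_i` and the `h_j`.
Here `max{x − y, 0}` for naturals is truncated subtraction `x - y`, and
`⌈k/2⌉ = (k+1)/2`. -/
theorem stmt_6 (s : ℕ) (hs : 1 ≤ s) (q₀ q g₀ g₁ g₂ g₃ g₄ : ℕ)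
    (hq₀ : q₀ = 2 ^ s) (hq : q = 2 * q₀ ^ 2)
    (hg₀ : g₀ = q ^ 2 - q + 1) (hg₁ : g₁ = q ^ 2 - 2 * q₀ + 1)
    (hg₂ : g₂ = q ^ 2 - q₀ + 1) (hg₃ : g₃ = q ^ 2) (hg₄ : g₄ = q ^ 2 + 1)
    (H : AddSubmonoid ℕ)
    (hH : H = AddSubmonoid.closure
      ({g₀, g₁, g₂, g₃, g₄} ∪
        {x | ∃ i : ℕ, i + 2 ≤ 2 * q₀ ∧ x = (i + 1) * q₀ * g₀ - i * g₄ - 1} ∪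
        {x | ∃ j : ℕ, j + 2 ≤ q₀ ∧ x = (2 * j + 1) * q₀ * g₀ - j * g₄ - q₀})) :
    ∀ i l k j : ℕ, q * (q - 2) / 2 + 1 ≤ i → i ≤ g₀ - 1 →
      g₀ - 1 - i = l * q + k * q₀ + j →
      j + 1 ≤ q₀ → k + 1 ≤ 2 * q₀ →
      (if j = q₀ - 1 then q - l - 1 - (q - q₀ * (k + 2 * l + 1))
       else q - l - 1 - (q - q₀ * ((k + 1) / 2 + j + l + 1))) * g₀ + i ∈ H := by
  subst hH
  set H := AddSubmonoid.closure
      (({g₀, g₁, g₂, g₃, g₄} : Set ℕ) ∪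
        {x | ∃ i : ℕ, i + 2 ≤ 2 * q₀ ∧ x = (i + 1) * q₀ * g₀ - i * g₄ - 1} ∪
        {x | ∃ j : ℕ, j + 2 ≤ q₀ ∧ x = (2 * j + 1) * q₀ * g₀ - j * g₄ - q₀}) with hHdef
  have h1 : g₁ ∈ H := AddSubmonoid.subset_closure (by simp)
  have h2 : g₂ ∈ H := AddSubmonoid.subset_closure (by simp)
  have h3 : g₃ ∈ H := AddSubmonoid.subset_closure (by simp)
  have h4 : g₄ ∈ H := AddSubmonoid.subset_closure (by simp)
  have hf : ∀ i : ℕ, i + 2 ≤ 2 * q₀ → (i + 1) * q₀ * g₀ - i * g₄ - 1 ∈ H := fun i hi =>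
    AddSubmonoid.subset_closure (Or.inl (Or.inr ⟨i, hi, rfl⟩))
  have hh : ∀ i : ℕ, i + 2 ≤ q₀ → (2 * i + 1) * q₀ * g₀ - i * g₄ - q₀ ∈ H := fun i hi =>
    AddSubmonoid.subset_closure (Or.inr ⟨i, hi, rfl⟩)
  clear_value H
  clear hHdef
  have hq2 : 2 ≤ q₀ := by
    rw [hq₀]
    calc 2 = 2 ^ 1 := by norm_num
      _ ≤ 2 ^ s := Nat.pow_le_pow_right (by norm_num) hs
  have hsq : 2 * q₀ ≤ q₀ ^ 2 := by rw [pow_two]; exact Nat.mul_le_mul_right _ hq2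
  have hqq : 4 * q₀ ≤ q := by omega
  have hqsq : 2 * q ≤ q ^ 2 := by nlinarith
  have e0 : g₀ + q = q ^ 2 + 1 := by omega
  have e1 : g₁ + 2 * q₀ = g₄ := by omega
  have e2 : g₂ + q₀ = g₄ := by omega
  have e3 : g₃ + 1 = g₄ := by omega
  have e4 : g₄ = g₀ + q := by omega
  have e5 : g₄ + 1 ≤ 2 * g₀ := by omega
  have e6 : 1 ≤ g₀ := by omega
  have hf' : ∀ i : ℕ, i + 2 ≤ 2 * q₀ → ∃ x ∈ H, x + i * g₄ + 1 = (i + 1) * q₀ * g₀ := by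
    intro i hi
    refine ⟨_, hf i hi, ?_⟩
    have : i * g₄ + 1 ≤ (i + 1) * q₀ * g₀ := by
      calc i * g₄ + 1 ≤ (i + 1) * (2 * g₀) := by nlinarith
        _ ≤ (i + 1) * (q₀ * g₀) := by gcongr
        _ = _ := by ring
    omega
  have hh' : ∀ i : ℕ, i + 2 ≤ q₀ → ∃ x ∈ H, x + i * g₄ + q₀ = (2 * i + 1) * q₀ * g₀ := by
    intro i hi
    refine ⟨_, hh i hi, ?_⟩
    have : i * g₄ + q₀ ≤ (2 * i + 1) * q₀ * g₀ := by
      have a1 : i * g₄ ≤ i * (2 * g₀) := by gcongr; omega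
      have a2 : i * (2 * g₀) * 1 ≤ i * (2 * g₀) * q₀ := by gcongr; omega
      have a3 : q₀ * 1 ≤ q₀ * g₀ := by gcongr
      nlinarith
    omega
  have key : ∀ k j : ℕ, ∃ x ∈ H, x + k * q₀ + j = ((k + 1) / 2 + j) * g₄ := by
    intro k j
    rcases Nat.even_or_odd' k with ⟨m, rfl | rfl⟩
    · refine ⟨m • g₁ + j • g₃, H.add_mem (H.nsmul_mem h1 _) (H.nsmul_mem h3 _), ?_⟩
      have : (2 * m + 1) / 2 = m := by omega
      rw [this]
      simp only [smul_eq_mul]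
      linear_combination m * e1 + j * e3
    · refine ⟨m • g₁ + g₂ + j • g₃,
        H.add_mem (H.add_mem (H.nsmul_mem h1 _) h2) (H.nsmul_mem h3 _), ?_⟩
      have : (2 * m + 1 + 1) / 2 = m + 1 := by omega
      rw [this]
      simp only [smul_eq_mul]
      linear_combination m * e1 + e2 + j * e3
  intro i l k j hi1 hi2 hi hj hk
  have ei : i + l * q + k * q₀ + j + q = q ^ 2 := by omega
  have hl : l + 1 + q₀ ^ 2 ≤ q := by
    have hd : q * (q - 2) / 2 = q₀ ^ 2 * (q - 2) := by
      rw [hq, mul_assoc, Nat.mul_div_cancel_left _ (by norm_num)]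
    rw [hd] at hi1
    obtain ⟨r, hr⟩ : ∃ r, q = r + 2 := ⟨q - 2, by omega⟩
    have hr2 : q - 2 = r := by omega
    rw [hr2] at hi1
    by_contra hcon
    have : q₀ ^ 2 ≤ l := by omega
    have : q₀ ^ 2 * q ≤ l * q := by gcongr
    have : q ^ 2 = q₀ ^ 2 * r + q₀ ^ 2 * q + 2 * q₀ ^ 2 := by
      linear_combination q * hq + q₀ ^ 2 * hr
    omega
  have big : ∀ A, A + l + 1 = q → A * g₀ + i ∈ H := by
    intro A hA
    obtain ⟨x, hx, ex⟩ := key k j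
    have hN : (k + 1) / 2 + j ≤ A := by
      omega
    obtain ⟨B, rfl⟩ := Nat.exists_eq_add_of_le hN
    have : ((k + 1) / 2 + j + B) * g₀ + i = x + B • g₄ := by
      simp only [smul_eq_mul]
      zify at *
      linear_combination ei - ex - q * hA + (((k:ℤ) + 1) / 2 + j) * e4 * (-1) - B * e4
    rw [this]
    exact H.add_mem hx (H.nsmul_mem h4 _)
  have small : ∀ A M, A + l + 1 = q₀ * M →
      A * g₀ + i + l * g₄ + k * q₀ + j + 1 = q₀ * M * g₀ := by
    intro A M hA
    zify at *
    linear_combination g₀ * hA + ei + l * e4 - e0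
  split_ifs with hc
  · by_cases hm : q ≤ q₀ * (k + 2 * l + 1)
    · apply big; omega
    · have hM : l + 1 ≤ q₀ * (k + 2 * l + 1) :=
        le_trans (by omega) (Nat.le_mul_of_pos_left _ (by omega))
      have hlt : k + 2 * l + 1 < 2 * q₀ := by
        by_contra hcon
        apply hm
        calc q = q₀ * (2 * q₀) := by rw [hq]; ring
          _ ≤ _ := Nat.mul_le_mul_left _ (by omega)
      have := small (q - l - 1 - (q - q₀ * (k + 2 * l + 1))) (k + 2 * l + 1) (by omega)
      generalize (q - l - 1 - (q - q₀ * (k + 2 * l + 1))) * g₀ + i = T at this ⊢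
      by_cases hlq : l + 2 ≤ q₀
      · obtain ⟨x, hx, ex⟩ := hh' l hlq
        obtain ⟨y, hy, ey⟩ := hh' 0 (by omega)
        have : T = x + k • y := by
          have hj' : j + 1 = q₀ := by omega
          simp only [smul_eq_mul]
          zify at *
          linear_combination this - ex - k * ey - hj'
        rw [this]
        exact H.add_mem hx (H.nsmul_mem hy _)
      · have hk0 : k = 0 := by omega
        have hl0 : l + 1 = q₀ := by omega
        have hjl : j = l := by omega
        subst hk0 hjl
        obtain ⟨x, hx, ex⟩ := hf' (2 * j) (by omega)
        have : T = x + j • g₃ := by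
          simp only [smul_eq_mul]
          zify at *
          linear_combination this - ex - j * e3
        rw [this]
        exact H.add_mem hx (H.nsmul_mem h3 _)
  · by_cases hm : q ≤ q₀ * ((k + 1) / 2 + j + l + 1)
    · apply big; omega
    · have hM : l + 1 ≤ q₀ * ((k + 1) / 2 + j + l + 1) :=
        le_trans (by omega) (Nat.le_mul_of_pos_left _ (by omega))
      have hlt : (k + 1) / 2 + j + l + 1 < 2 * q₀ := by
        by_contra hcon
        apply hm
        calc q = q₀ * (2 * q₀) := by rw [hq]; ring
          _ ≤ _ := Nat.mul_le_mul_left _ (by omega)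
      have := small (q - l - 1 - (q - q₀ * ((k + 1) / 2 + j + l + 1)))
        ((k + 1) / 2 + j + l + 1) (by omega)
      generalize (q - l - 1 - (q - q₀ * ((k + 1) / 2 + j + l + 1))) * g₀ + i = T at this ⊢
      obtain ⟨x, hx, ex⟩ := hf' ((k + 1) / 2 + j + l) (by omega)
      obtain ⟨y, hy, ey⟩ := key k j
      generalize (k + 1) / 2 = c at *
      have : T = x + y := by
        zify at *
        linear_combination this - ex - ey
      rw [this]
      exact H.add_mem hx hy
end

section
/- Let s ≥ 1 be an integer, q₀ = 2^s and q = 2q₀². Define φ₁ on {0,…,q(q−2)/2} by: write i = lq + kq₀ + j with 0 ≤ j ≤ q₀−1, 0 ≤ k ≤ 2q₀−1, l ≥ 0, and set φ₁(i) = l if j = 0 and k = 0; φ₁(i) = l + 1 + max{q − q₀(k+2l+2), 0} if j = 0 and k ≠ 0; φ₁(i) = l + 1 + max{q − q₀(⌈k/2⌉+j+l+1), 0} if j ≠ 0. Define φ₂ on {q(q−2)/2 + 1,…,q²−q} by: write q² − q − i = lq + kq₀ + j with 0 ≤ j ≤ q₀−1, 0 ≤ k ≤ 2q₀−1, l ≥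 0, and set φ₂(i) = q − l − 1 − max{q − q₀(k+2l+1), 0} if j = q₀−1; φ₂(i) = q − l − 1 − max{q − q₀(⌈k/2⌉+j+l+1), 0} if j ≠ q₀−1. Then for every integer i with 0 ≤ i ≤ q(q−2)/2, one has φ₁(i) + φ₂((q−1)² − i) = q − 1. -/
/-- For every `0 ≤ i ≤ q(q−2)/2` one has `φ₁(i) + φ₂((q−1)² − i) = q − 1`.
The functions `φ₁` and `φ₂` are characterized by their values on the unique
decomposition `n = lq + kq₀ + j` with `0 ≤ j ≤ q₀−1`, `0 ≤ k ≤ 2q₀−1`, `l ≥ 0`.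
Here `max{x − y, 0}` for naturals is truncated subtraction `x - y`, and
`⌈k/2⌉ = (k+1)/2`. -/
theorem stmt_7 (s : ℕ) (hs : 1 ≤ s) (q₀ q : ℕ)
    (hq₀ : q₀ = 2 ^ s) (hq : q = 2 * q₀ ^ 2)
    (φ₁ φ₂ : ℕ → ℕ)
    (hφ₁ : ∀ i l k j : ℕ, i ≤ q * (q - 2) / 2 → i = l * q + k * q₀ + j →
      j + 1 ≤ q₀ → k + 1 ≤ 2 * q₀ →
      φ₁ i = if j = 0 ∧ k = 0 then l
             else if j = 0 then l + 1 + (q - q₀ * (k + 2 * l + 2))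
             else l + 1 + (q - q₀ * ((k + 1) / 2 + j + l + 1)))
    (hφ₂ : ∀ i l k j : ℕ, q * (q - 2) / 2 + 1 ≤ i → i ≤ q ^ 2 - q →
      q ^ 2 - q - i = l * q + k * q₀ + j →
      j + 1 ≤ q₀ → k + 1 ≤ 2 * q₀ →
      φ₂ i = if j = q₀ - 1 then q - l - 1 - (q - q₀ * (k + 2 * l + 1))
             else q - l - 1 - (q - q₀ * ((k + 1) / 2 + j + l + 1))) :
    ∀ i : ℕ, i ≤ q * (q - 2) / 2 → φ₁ i + φ₂ ((q - 1) ^ 2 - i) = q - 1 := by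
  intro i hi
  have h2 : 2 ≤ q₀ := by
    rw [hq₀]
    calc 2 = 2 ^ 1 := by norm_num
      _ ≤ 2 ^ s := Nat.pow_le_pow_right (by norm_num) hs
  clear hq₀ hs
  obtain ⟨r, hr⟩ : ∃ r, q₀ ^ 2 = r + 1 := ⟨q₀ ^ 2 - 1, by
    have : 0 < q₀ ^ 2 := by positivity
    omega⟩
  have hqr : q = 2 * r + 2 := by omega
  have hhalf : q * (q - 2) / 2 = 2 * (r * r) + 2 * r := by
    rw [hqr, Nat.add_sub_cancel]
    have : (2 * r + 2) * (2 * r) = 2 * (2 * (r * r) + 2 * r) := by ring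
    rw [this]; simp
  have hsq : (q - 1) ^ 2 = 4 * (r * r) + 4 * r + 1 := by
    have : q - 1 = 2 * r + 1 := by omega
    rw [this]; ring
  have hqq : q ^ 2 = 4 * (r * r) + 8 * r + 4 := by rw [hqr]; ring
  have hlow : q * (q - 2) / 2 + 1 ≤ (q - 1) ^ 2 - i := by omega
  have hup : (q - 1) ^ 2 - i ≤ q ^ 2 - q := by omega
  have hn : q ^ 2 - q - ((q - 1) ^ 2 - i) = i + (q - 1) := by omega
  have hq2 : q = 2 * q₀ * q₀ := by rw [hq]; ring
  have hqpos : 0 < q := by omega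
  obtain ⟨l, k, j, hd, hj, hk⟩ : ∃ l k j, i = l * q + k * q₀ + j ∧ j + 1 ≤ q₀ ∧
      k + 1 ≤ 2 * q₀ := by
    refine ⟨i / q, (i % q) / q₀, (i % q) % q₀, ?_, Nat.mod_lt _ (by omega), ?_⟩
    · have e1 := Nat.div_add_mod' i q
      have e2 := Nat.div_add_mod' (i % q) q₀
      omega
    · apply (Nat.div_lt_iff_lt_mul (by omega)).2
      rw [← hq2]
      exact Nat.mod_lt _ hqpos
  have hl : l ≤ r := by
    by_contra hc
    have h1 : (r + 1) * q ≤ l * q := Nat.mul_le_mul_right _ (by omega)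
    have h3 : (r + 1) * q = 2 * (r * r) + 4 * r + 2 := by rw [hqr]; ring
    omega
  have e1 := hφ₁ i l k j hi hd hj hk
  have key : ∀ c, l + 2 ≤ c → l + 2 + (q - q₀ * c) ≤ q := by
    intro c hc
    have : 1 * c ≤ q₀ * c := Nat.mul_le_mul_right _ (by omega)
    omega
  rcases Nat.eq_zero_or_pos j with hj0 | hj0
  · rcases Nat.eq_zero_or_pos k with hk0 | hk0
    · have e2 := hφ₂ _ l (2 * q₀ - 1) (q₀ - 1) hlow hup (by
        rw [hn, hd, hj0, hk0, Nat.sub_mul, ← hq2]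
        have : q₀ ≤ q := by rw [hq2]; nlinarith
        omega) (by omega) (by omega)
      have h0 : q - q₀ * (2 * q₀ - 1 + 2 * l + 1) = 0 := by
        apply Nat.sub_eq_zero_of_le
        have : 2 * q₀ - 1 + 2 * l + 1 = 2 * q₀ + 2 * l := by omega
        rw [this, hq2]; nlinarith [Nat.zero_le (q₀ * l)]
      rw [if_pos ⟨hj0, hk0⟩] at e1
      rw [if_pos rfl, h0] at e2
      omega
    · obtain ⟨k, rfl⟩ : ∃ k', k = k' + 1 := ⟨k - 1, by omega⟩
      have e2 := hφ₂ _ (l + 1) k (q₀ - 1) hlow hup (by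
        rw [hn, hd, hj0, Nat.add_mul, Nat.add_mul]
        omega) (by omega) (by omega)
      rw [if_neg (by omega), if_pos hj0] at e1
      rw [if_pos rfl, show k + 2 * (l + 1) + 1 = k + 1 + 2 * l + 2 by ring] at e2
      have := key (k + 1 + 2 * l + 2) (by omega)
      omega
  · obtain ⟨j, rfl⟩ : ∃ k', j = k' + 1 := ⟨j - 1, by omega⟩
    have e2 := hφ₂ _ (l + 1) k j hlow hup (by
        rw [hn, hd, Nat.add_mul]
        omega) (by omega) (by omega)
    rw [if_neg (by omega), if_neg (by omega)] at e1
    rw [if_neg (by omega), show (k + 1) / 2 + j + (l + 1) + 1 = (k + 1) / 2 + (j + 1) + l + 1 by ring] at e2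
    have := key ((k + 1) / 2 + (j + 1) + l + 1) (by omega)
    omega
end

section
/- Let s ≥ 1 be an integer, q₀ = 2^s and q = 2q₀². Define φ₂ on {(q−1)²+1,…,q²−q} by: write q² − q − i = kq₀ + j with 0 ≤ j ≤ q₀−1 and 0 ≤ k ≤ 2q₀−1 (note q² − q − i ≤ q−2 here), and set φ₂(i) = q₀(k+1) − 1 if j = q₀−1, and φ₂(i) = q₀(⌈k/2⌉ + j + 1) − 1 if j ≠ q₀−1. Then the sum of φ₂(i) over all integers i with (q−1)² + 1 ≤ i ≤ q² − q equals q²/2 − 3q/2 + 1. -/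
theorem aux_split (g : ℕ → ℕ) (m K : ℕ) :
    ∑ n ∈ Finset.range (K * m), g n = ∑ k ∈ Finset.range K, ∑ j ∈ Finset.range m, g (k * m + j) := by
  induction K with
  | zero => simp
  | succ K ih => rw [Nat.succ_mul, Finset.sum_range_add, ih, Finset.sum_range_succ]

theorem aux_inner (c m t : ℕ) :
    2 * ∑ j ∈ Finset.range t, m * (c + j + 1) = 2 * m * t * c + m * (t * (t + 1)) := by
  induction t with
  | zero => simp
  | succ t ih => rw [Finset.sum_range_succ, mul_add, ih]; ring

theorem aux_outer (m t K : ℕ) :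
    2 * ∑ k ∈ Finset.range (2 * K),
      (∑ j ∈ Finset.range t, m * ((k + 1) / 2 + j + 1) + m * (k + 1)) =
    2 * m * (K * (2 * K + 1)) + 2 * m * t * K ^ 2 + 2 * K * (m * (t * (t + 1))) := by
  induction K with
  | zero => simp
  | succ K ih =>
    rw [show 2 * (K + 1) = 2 * K + 1 + 1 by ring, Finset.sum_range_succ, Finset.sum_range_succ,
      mul_add, mul_add, ih, mul_add 2 (∑ j ∈ Finset.range t, _), mul_add 2 (∑ j ∈ Finset.range t, _),
      aux_inner, aux_inner,
      show (2 * K + 1) / 2 = K by omega, show (2 * K + 1 + 1) / 2 = K + 1 by omega]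
    ring

theorem aux_total (t : ℕ) (g : ℕ → ℕ)
    (hg : ∀ k j, j < t + 1 → k < 2 * (t + 1) → g (k * (t + 1) + j) =
      if j = t then (t + 1) * (k + 1) else (t + 1) * ((k + 1) / 2 + j + 1)) :
    ∑ n ∈ Finset.range (2 * (t + 1) * (t + 1)), g n = 2 * (t + 1) ^ 4 + (t + 1) ^ 2 := by
  have h2 := aux_outer (t + 1) t (t + 1)
  rw [aux_split]
  have : ∀ k ∈ Finset.range (2 * (t + 1)), ∑ j ∈ Finset.range (t + 1), g (k * (t + 1) + j) =
      ∑ j ∈ Finset.range t, (t + 1) * ((k + 1) / 2 + j + 1) + (t + 1) * (k + 1) := by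
    intro k hk
    rw [Finset.mem_range] at hk
    rw [Finset.sum_range_succ, hg k t (by omega) hk, if_pos rfl]
    congr 1
    apply Finset.sum_congr rfl
    intro j hj
    rw [Finset.mem_range] at hj
    rw [hg k j (by omega) hk, if_neg (by omega)]
  rw [Finset.sum_congr rfl this]
  apply Nat.eq_of_mul_eq_mul_left (show 0 < 2 by norm_num)
  rw [h2]
  ring

/-- The sum of `φ₂(i)` over `(q−1)² + 1 ≤ i ≤ q² − q` equals `q²/2 − 3q/2 + 1`.
For such `i`, the difference `q² − q − i` lies in `{0,…,q−2}` and is written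
uniquely as `kq₀ + j` with `0 ≤ j ≤ q₀−1`, `0 ≤ k ≤ 2q₀−1`, and
`φ₂(i) = q₀(k+1) − 1` if `j = q₀ − 1`, `φ₂(i) = q₀(⌈k/2⌉ + j + 1) − 1` otherwise,
with `⌈k/2⌉ = (k+1)/2`. -/
theorem stmt_8 (s : ℕ) (hs : 1 ≤ s) (q₀ q : ℕ)
    (hq₀ : q₀ = 2 ^ s) (hq : q = 2 * q₀ ^ 2)
    (φ₂ : ℕ → ℕ)
    (hφ₂ : ∀ i k j : ℕ, (q - 1) ^ 2 + 1 ≤ i → i ≤ q ^ 2 - q →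
      q ^ 2 - q - i = k * q₀ + j →
      j + 1 ≤ q₀ → k + 1 ≤ 2 * q₀ →
      φ₂ i = if j = q₀ - 1 then q₀ * (k + 1) - 1
             else q₀ * ((k + 1) / 2 + j + 1) - 1) :
    ∑ i ∈ Finset.Icc ((q - 1) ^ 2 + 1) (q ^ 2 - q), φ₂ i = q ^ 2 / 2 - 3 * q / 2 + 1 := by
  have hpos : 2 ≤ q₀ := by
    rw [hq₀]
    calc 2 = 2 ^ 1 := by norm_num
      _ ≤ 2 ^ s := Nat.pow_le_pow_right (by norm_num) hs
  clear hq₀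
  obtain ⟨t, rfl⟩ : ∃ t, q₀ = t + 1 := ⟨q₀ - 1, by omega⟩
  obtain ⟨r, hr⟩ : ∃ r, q = r + 1 := ⟨q - 1, by
    have : 0 < q := by rw [hq]; positivity
    omega⟩
  have e1 : (q - 1) ^ 2 = r ^ 2 := by rw [hr]; simp
  have e2 : q ^ 2 - q = r ^ 2 + r := by
    rw [hr]; apply Nat.sub_eq_of_eq_add; ring
  simp only [e1, e2] at hφ₂
  rw [e1, e2]
  -- the function `g` on differences
  let g : ℕ → ℕ := fun n => if n % (t + 1) = t then (t + 1) * (n / (t + 1) + 1)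
      else (t + 1) * ((n / (t + 1) + 1) / 2 + n % (t + 1) + 1)
  have hgv : ∀ k j, j < t + 1 → g (k * (t + 1) + j) =
      if j = t then (t + 1) * (k + 1) else (t + 1) * ((k + 1) / 2 + j + 1) := by
    intro k j hj
    have a1 : (k * (t + 1) + j) % (t + 1) = j := by
      rw [mul_comm, Nat.mul_add_mod, Nat.mod_eq_of_lt hj]
    have a2 : (k * (t + 1) + j) / (t + 1) = k := by
      rw [mul_comm, Nat.mul_add_div (by omega), Nat.div_eq_of_lt hj, add_zero]
    simp only [g, a1, a2]
  have htot := aux_total t g (fun k j hj _ => hgv k j hj)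
  have hqq : 2 * (t + 1) * (t + 1) = r + 1 := by rw [← hr, hq]; ring
  have hlast : g r = r + 1 := by
    have : r = (2 * t + 1) * (t + 1) + t := by nlinarith
    rw [this, hgv _ _ (by omega), if_pos rfl]; ring
  rw [hqq, Finset.sum_range_succ, hlast] at htot
  have hsum : ∑ i ∈ Finset.Icc (r ^ 2 + 1) (r ^ 2 + r), (φ₂ i + 1) = ∑ n ∈ Finset.range r, g n := by
    refine Finset.sum_bij' (fun i _ => r ^ 2 + r - i) (fun n _ => r ^ 2 + r - n) ?_ ?_ ?_ ?_ ?_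
    · intro i hi; simp only [Finset.mem_Icc, Finset.mem_range] at *; omega
    · intro i hi; simp only [Finset.mem_Icc, Finset.mem_range] at *; omega
    · intro i hi; simp only [Finset.mem_Icc] at *; omega
    · intro i hi; simp only [Finset.mem_range] at *; omega
    · intro i hi
      simp only [Finset.mem_Icc] at hi
      have hm : (r ^ 2 + r - i) % (t + 1) < t + 1 := Nat.mod_lt _ (by omega)
      have hd : (r ^ 2 + r - i) / (t + 1) < 2 * (t + 1) := by
        rw [Nat.div_lt_iff_lt_mul (by omega)]; omega
      rw [hφ₂ i ((r ^ 2 + r - i) / (t + 1)) ((r ^ 2 + r - i) % (t + 1)) hi.1 hi.2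
        (by rw [mul_comm]; exact (Nat.div_add_mod _ _).symm) (by omega) (by omega)]
      simp only [g, Nat.add_sub_cancel]
      split_ifs
      · exact Nat.sub_add_cancel (Nat.mul_pos (Nat.succ_pos _) (Nat.succ_pos _))
      · exact Nat.sub_add_cancel (Nat.mul_pos (Nat.succ_pos _) (Nat.succ_pos _))
  rw [Finset.sum_add_distrib] at hsum
  simp only [Finset.sum_const, Nat.card_Icc, smul_eq_mul, mul_one] at hsum
  have e3 : q ^ 2 / 2 = 2 * (t + 1) ^ 4 := by
    rw [hq]; apply Nat.div_eq_of_eq_mul_right (by norm_num); ring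
  have e4 : 3 * q / 2 = 3 * (t + 1) ^ 2 := by
    rw [hq]; apply Nat.div_eq_of_eq_mul_right (by norm_num); ring
  rw [e3, e4]
  have e5 : 3 * (t + 1) ^ 2 ≤ 2 * (t + 1) ^ 4 := by
    have : 4 ≤ (t + 1) ^ 2 := by nlinarith
    have h4 : (t + 1) ^ 4 = (t + 1) ^ 2 * (t + 1) ^ 2 := by ring
    rw [h4]; nlinarith
  rw [hr] at hq
  omega
end

section
/- Let s ≥ 1 be an integer, q₀ = 2^s and q = 2q₀². Let H be the numerical semigroup generated by the 3q₀+3 elements g₀ = q²−q+1, g₁ = q²−2q₀+1, g₂ = q²−q₀+1, g₃ = q², g₄ = q²+1, f_i = (i+1)q₀g₀ − i·g₄ − 1 for i = 0,…,2q₀−2, and h_j = (2j+1)q₀g₀ − j·g₄ − q₀ for j = 0,…,q₀−2. Then H has exactly q(q−1)²/2 gaps, i.e. the complement ℕ \ H has cardinality q(q−1)²/2. -/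
theorem aux_rep (P : ℕ → ℕ → Prop) (p q : ℕ) (hp : 2 ≤ p)
    (hadd : ∀ a b a' b', P a b → P a' b' → P (a + a') (b + b'))
    (h00 : P 0 0) (h11 : P 1 1) (h1p : P 1 p) (h12p : P 1 (2 * p)) (h1q : P 1 q)
    (hf : ∀ i a, i + 2 ≤ 2 * p → a + i = p * (i + 1) → P a ((i + 1) * p * q + 1))
    (hh : ∀ j a, j + 2 ≤ p → a + j = p * (2 * j + 1) → P a ((2 * j + 1) * p * q + p)) :
    (∀ c d e f, P (c + d + e + f) (c * q + d * (2 * p) + e * p + f)) ∧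
    (∀ C c d e f a, C + 1 ≤ 2 * p → a + C = C * p + c + d + e + f + 1 →
      P a ((C * p + c) * q + d * (2 * p) + e * p + f + 1)) ∧
    (∀ C c d K a, C + 1 ≤ 2 * p → 2 * K ≤ C + 1 → a + K = C * p + c + d + 1 →
      P a ((C * p + c) * q + d * (2 * p) + p)) ∧
    (∀ C c d K a, C + 1 ≤ 2 * p → 2 * K ≤ C → a + K = C * p + c + d + 1 →
      P a ((C * p + c) * q + d * (2 * p) + 2 * p)) := by
  have hmul : ∀ a b n, P a b → P (n * a) (n * b) := by
    intro a b n h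
    induction n with
    | zero => simpa using h00
    | succ n ih =>
      have := hadd _ _ _ _ ih h
      rwa [← Nat.succ_mul, ← Nat.succ_mul] at this
  have hlin : ∀ c d e f, P (c + d + e + f) (c * q + d * (2 * p) + e * p + f) := by
    intro c d e f
    have := hadd _ _ _ _ (hadd _ _ _ _ (hadd _ _ _ _ (hmul _ _ c h1q) (hmul _ _ d h12p))
      (hmul _ _ e h1p)) (hmul _ _ f h11)
    simpa using this
  have hF : ∀ C c d e f a, C + 1 ≤ 2 * p → a + C = C * p + c + d + e + f + 1 →
      P a ((C * p + c) * q + d * (2 * p) + e * p + f + 1) := by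
    intro C c d e f a hC ha
    rcases C with _ | i
    · have := hlin c d e (f + 1)
      simp only [Nat.zero_mul, Nat.zero_add] at ha ⊢
      rw [show a = c + d + e + (f + 1) by omega]
      exact this
    · have hi : i ≤ p * (i + 1) := by nlinarith
      obtain ⟨t, ht⟩ := Nat.exists_eq_add_of_le hi
      have h1 := hf i t (by omega) (by omega)
      have := hadd _ _ _ _ h1 (hlin c d e f)
      convert this using 1
      · have : (i + 1) * p = p * (i + 1) := by ring
        omega
      · ring
  have hH : ∀ C c d K a, C + 1 ≤ 2 * p → 2 * K ≤ C + 1 → a + K = C * p + c + d + 1 →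
      P a ((C * p + c) * q + d * (2 * p) + p) := by
    intro C c d K a hC hK ha
    rcases K with _ | j
    · have := hlin (C * p + c) d 1 0
      convert this using 1
      · omega
      · ring
    · by_cases hj : j + 2 ≤ p
      · obtain ⟨D, rfl⟩ := Nat.exists_eq_add_of_le (show 2 * j + 1 ≤ C by omega)
        have hi : j ≤ p * (2 * j + 1) := by nlinarith
        obtain ⟨t, ht⟩ := Nat.exists_eq_add_of_le hi
        have h1 := hh j t hj (by omega)
        have := hadd _ _ _ _ h1 (hlin (D * p + c) d 0 0)
        convert this using 1
        · have : (2 * j + 1 + D) * p = p * (2 * j + 1) + D * p := by ring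
          omega
        · ring
      · have := hF C c d 0 (p - 1) a hC (by omega)
        convert this using 1
        omega
  refine ⟨hlin, hF, hH, ?_⟩
  intro C c d K a hC hK ha
  rcases K with _ | j
  · have := hlin (C * p + c) (d + 1) 0 0
    convert this using 1
    · omega
    · ring
  · obtain ⟨D, rfl⟩ := Nat.exists_eq_add_of_le (show 2 * j + 2 ≤ C by omega)
    have hi : j ≤ p * (2 * j + 1) := by nlinarith
    obtain ⟨t, ht⟩ := Nat.exists_eq_add_of_le hi
    have h1 := hh j t (by omega) (by omega)
    have h2 := hh 0 p (by omega) (by ring)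
    have := hadd _ _ _ _ (hadd _ _ _ _ h1 h2) (hlin (D * p + c) d 0 0)
    convert this using 1
    · have : (2 * j + 2 + D) * p = p * (2 * j + 1) + p + D * p := by ring
      omega
    · ring

theorem aux_dual (P : ℕ → ℕ → Prop) (p q : ℕ) (hp : 2 ≤ p) (hq : q = 2 * p ^ 2)
    (hadd : ∀ a b a' b', P a b → P a' b' → P (a + a') (b + b'))
    (h00 : P 0 0) (h11 : P 1 1) (h1p : P 1 p) (h12p : P 1 (2 * p)) (h1q : P 1 q)
    (hf : ∀ i a, i + 2 ≤ 2 * p → a + i = p * (i + 1) → P a ((i + 1) * p * q + 1))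
    (hh : ∀ j a, j + 2 ≤ p → a + j = p * (2 * j + 1) → P a ((2 * j + 1) * p * q + p))
    (b b' : ℕ) (hb : b + b' = q ^ 2) :
    ∃ a a', a + a' = q ∧ P a b ∧ P a' b' := by
  obtain ⟨hlin, hF, hH, hG⟩ := aux_rep P p q hp hadd h00 h11 h1p h12p h1q hf hh
  have hq0 : 0 < q := by subst hq; positivity
  have hp0 : 0 < p := by omega
  obtain ⟨c, r, hr, rfl⟩ : ∃ c r, r < q ∧ b = c * q + r :=
    ⟨b / q, b % q, Nat.mod_lt _ hq0, by rw [mul_comm]; exact (Nat.div_add_mod b q).symm⟩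
  rcases Nat.eq_zero_or_pos r with rfl | hr0
  · have hcq : c ≤ q := by
      by_contra hcon
      nlinarith
    obtain ⟨c', rfl⟩ := Nat.exists_eq_add_of_le hcq
    refine ⟨c, c', rfl, ?_, ?_⟩
    · simpa using hlin c 0 0 0
    · have := hlin c' 0 0 0
      have h' : (c + c') ^ 2 = c * (c + c') + c' * (c + c') := by ring
      rw [show b' = c' * (c + c') by linarith]
      simpa using this
  · have hcq : c < q := by
      by_contra hcon
      nlinarith
    obtain ⟨C, x, hx, rfl⟩ : ∃ C x, x < p ∧ c = C * p + x :=
      ⟨c / p, c % p, Nat.mod_lt _ hp0, by rw [mul_comm]; exact (Nat.div_add_mod c p).symm⟩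
    obtain ⟨u, f, hfp, rfl⟩ : ∃ u f, f < p ∧ r = u * p + f :=
      ⟨r / p, r % p, Nat.mod_lt _ hp0, by rw [mul_comm]; exact (Nat.div_add_mod r p).symm⟩
    obtain ⟨d, e, he, rfl⟩ : ∃ d e, e < 2 ∧ u = 2 * d + e :=
      ⟨u / 2, u % 2, Nat.mod_lt _ (by omega), (Nat.div_add_mod u 2).symm⟩
    have hC : C < 2 * p := by
      by_contra hcon
      nlinarith
    have hd : d < p := by
      by_contra hcon
      nlinarith
    obtain ⟨C', hC'⟩ := Nat.exists_eq_add_of_le (show C + 1 ≤ 2 * p by omega)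
    obtain ⟨x', hx'⟩ := Nat.exists_eq_add_of_le (show x + 1 ≤ p by omega)
    obtain ⟨d', hd'⟩ := Nat.exists_eq_add_of_le (show d + 1 ≤ p by omega)
    have hle : ∀ D : ℕ, D ≤ D * p := fun D => Nat.le_mul_of_pos_right D hp0
    have e1 : C * p + C' * p + p = q := by
      have : 2 * p * p = q := by rw [hq]; ring
      rw [← this, hC']; ring
    have hCl := hle C
    have hCl' := hle C'
    -- key: b' = (C' p + x') q + (q - r)
    have hb'' : b' + ((2 * d + e) * p + f) = (C' * p + x') * q + q := by
      have : q * q = (C * p + x) * q + (C' * p + x') * q + q := by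
        have : q = (C * p + x) + (C' * p + x') + 1 := by omega
        nth_rewrite 1 [this]; ring
      nlinarith
    have hqd : q = 2 * (d * p) + 2 * (d' * p) + 2 * p := by
      have : 2 * p * p = q := by rw [hq]; ring
      rw [← this]; nth_rewrite 1 [hd']; ring
    rcases Nat.eq_zero_or_pos f with rfl | hf0
    · have he' : e = 0 ∨ e = 1 := by omega
      rcases he' with rfl | rfl
      · rcases d with _ | d
        · simp at hr0
        · refine ⟨C * p + x + d + 1 - C / 2, C' * p + x' + d' + 1 - C' / 2, by omega, ?_, ?_⟩
          · have := hG C x d (C / 2) (C * p + x + d + 1 - C / 2) (by omega) (by omega) (by omega)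
            convert this using 1
            ring
          · have := hG C' x' d' (C' / 2) (C' * p + x' + d' + 1 - C' / 2)
              (by omega) (by omega) (by omega)
            convert this using 1
            linarith
      · refine ⟨C * p + x + d + 1 - (C + 1) / 2, C' * p + x' + d' + 1 - (C' + 1) / 2,
          by omega, ?_, ?_⟩
        · have := hH C x d ((C + 1) / 2) (C * p + x + d + 1 - (C + 1) / 2)
            (by omega) (by omega) (by omega)
          convert this using 1
          ring
        · have := hH C' x' d' ((C' + 1) / 2) (C' * p + x' + d' + 1 - (C' + 1) / 2)
            (by omega) (by omega) (by omega)
          convert this using 1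
          linarith
    · obtain ⟨f, rfl⟩ := Nat.exists_eq_add_of_le' hf0
      obtain ⟨f', hf'⟩ := Nat.exists_eq_add_of_le (show f + 2 ≤ p by omega)
      obtain ⟨e', hee⟩ := Nat.exists_eq_add_of_le (show e ≤ 1 by omega)
      refine ⟨C * p + x + d + e + f + 1 - C, C' * p + x' + d' + e' + f' + 1 - C',
        by omega, ?_, ?_⟩
      · have := hF C x d e f (C * p + x + d + e + f + 1 - C) (by omega) (by omega)
        convert this using 1
        ring
      · have := hF C' x' d' e' f' (C' * p + x' + d' + e' + f' + 1 - C') (by omega) (by omega)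
        convert this using 1
        have : e * p + e' * p = p := by rw [← add_mul, ← hee, one_mul]
        linarith

set_option maxHeartbeats 2000000 in
theorem aux_F (p q X x1 Y Z W I V v : ℤ) (hp : 2 ≤ p) (hq : q = 2 * p ^ 2)
    (hX : 0 ≤ X) (hx1 : 0 ≤ x1) (hZ : 0 ≤ Z) (hW : 0 ≤ W) (hI : 0 ≤ I) (hv : 0 ≤ v)
    (h1 : I ≤ (2 * p - 1) * Z) (h2 : V ≤ (p - 1) * v) (h3 : v ≤ Y) (h4 : v ≤ V)
    (h5 : p * (I + 2 * V - v) ≤ X)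
    (h : (q - 2) * (q ^ 2 + 1) + 1 + (X * q + 2 * p * x1 + p * Y + Z) =
      (X + x1 + Y + Z + W - I - V) * (q ^ 2 + 1)) : False := by
  obtain ⟨k, hk⟩ : ∃ k, k = (X + x1 + Y + Z + W - I - V) - (q - 2) := ⟨_, rfl⟩
  have hb : X * q + 2 * p * x1 + p * Y + Z + 1 = k * (q ^ 2 + 1) := by rw [hk]; linarith
  have hY : 0 ≤ Y := by linarith
  have hq8 : 4 * p ≤ q := by nlinarith
  have hsav : p * (I + V) ≤ X := by nlinarith
  have hk1 : 1 ≤ k := by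
    by_contra hcon
    have : 0 ≤ X * q := by apply mul_nonneg <;> linarith
    have : 0 ≤ p * x1 := by apply mul_nonneg <;> linarith
    have : 0 ≤ p * Y := by apply mul_nonneg <;> linarith
    nlinarith
  have hpa : (p - 1) * X + p * (x1 + Y + Z) ≤ p * (q - 2 + k) := by
    have : q - 2 + k = X + x1 + Y + Z + W - I - V := by linarith
    rw [this]
    nlinarith
  rcases eq_or_lt_of_le hk1 with rfl | hk2
  · have hb' : X * q + 2 * p * x1 + p * Y + Z = q ^ 2 := by linarith
    have ha : X + x1 + Y + Z + W - I - V = q - 1 := by linarith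
    -- Z = t p
    obtain ⟨t, rfl⟩ : p ∣ Z := by
      have : Z = p * (2 * p * q - 2 * x1 - Y - X * (2 * p)) := by
        have : q ^ 2 = p * (2 * p * q) := by rw [sq]; nth_rewrite 1 [hq]; ring
        have h' : X * q = p * (X * (2 * p)) := by rw [hq]; ring
        linarith
      exact ⟨_, this⟩
    have ht : 0 ≤ t := by
      by_contra hcon
      nlinarith
    have hpp : 0 < p := by linarith
    have hM : 2 * x1 + Y + t = 2 * p * (q - X) := by
      have : p * (2 * x1 + Y + t) = p * (2 * p * (q - X)) := by
        have : p * (2 * p * (q - X)) = q ^ 2 - X * q := by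
          rw [sq]; nth_rewrite 2 [hq]; nth_rewrite 3 [hq]; rw [hq]; ring
        linarith
      exact mul_left_cancel₀ (ne_of_gt hpp) this
    obtain ⟨M, hMX⟩ : ∃ M, M = q - X := ⟨_, rfl⟩
    rw [← hMX] at hM
    have hX' : X = q - M := by linarith
    subst hX'
    have hM0 : 0 ≤ M := by
      by_contra hcon
      nlinarith
    have hpa' : p * ((t - 2) * p + 1 + (x1 + Y)) ≤ (p - 1) * M := by
      rw [hq] at hpa
      linarith
    have ht3 : t = 0 ∨ t = 1 ∨ 2 ≤ t := by omega
    rcases ht3 with rfl | rfl | ht2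
    · have hI0 : I = 0 := by
        have : (2 * p - 1) * (p * 0) = 0 := by ring
        linarith
      subst hI0
      rcases eq_or_lt_of_le hM0 with rfl | hM1
      · have hY0 : Y = 0 := by linarith
        have hv0 : v = 0 := by linarith
        subst hv0
        linarith
      · have h6 : 2 * V - v < 2 * p := by
          by_contra hcon
          nlinarith
        have h7 : (p - 1) * 1 ≤ (p - 1) * M := by
          apply mul_le_mul_of_nonneg_left <;> linarith
        have h8 : V ≥ x1 + Y - M + 1 := by linarith
        have h9 : 2 * x1 + Y = 2 * (p * M) := by linarith
        have h10 : p - 1 ≤ p * M - M := by linarith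
        generalize p * M = pM at *
        omega
    · have h9 : 2 * x1 + Y + 1 = 2 * (p * M) := by linarith
      have h10 : p * M ≤ x1 + Y := by
        clear hpa' hpa h1 h2 h5 h hb hb' ha
        generalize p * M = pM at *
        omega
      have hM1 : 1 ≤ M := by
        by_contra hcon
        have : M = 0 := by omega
        subst this
        linarith
      have h11 : p * (p * M) ≤ p * (x1 + Y) := by
        apply mul_le_mul_of_nonneg_left <;> linarith
      have h12 : 0 ≤ (p ^ 2 - p + 1) * (M - 1) := by
        apply mul_nonneg
        · nlinarith
        · linarith
      nlinarith
    · have h9 : (p - 1) * (2 * x1 + Y + t) = (2 * p) * ((p - 1) * M) := by rw [hM]; ring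
      have h10 : (2 * p) * (p * ((t - 2) * p + 1 + (x1 + Y))) ≤ (2 * p) * ((p - 1) * M) := by
        apply mul_le_mul_of_nonneg_left <;> linarith
      obtain ⟨m, rfl⟩ : ∃ m, t = 2 + m := ⟨t - 2, by ring⟩
      have hm : 0 ≤ m := by linarith
      have e1 : 0 ≤ (2 * p ^ 3 - (p - 1)) * m := by
        apply mul_nonneg _ hm
        nlinarith [pow_pos hpp 2, pow_pos hpp 3]
      have e2 : 0 ≤ (2 * p ^ 2 - 2 * (p - 1)) * (x1 + Y) := by
        apply mul_nonneg
        · nlinarith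
        · linarith
      have e3 : 0 ≤ (p - 1) * Y := by
        apply mul_nonneg <;> linarith
      nlinarith
  · obtain ⟨m, rfl⟩ : ∃ m, k = 2 + m := ⟨k - 2, by ring⟩
    have hm : 0 ≤ m := by linarith
    have hq0 : 0 < q := by linarith
    have h6 : q * ((p - 1) * X + p * (x1 + Y + Z)) ≤ q * (p * (q - 2 + (2 + m))) := by
      apply mul_le_mul_of_nonneg_left hpa; linarith
    have h7 : (p - 1) * (X * q) = (p - 1) * ((2 + m) * (q ^ 2 + 1) - 1 - 2 * p * x1 - p * Y - Z) := by
      congr 1; linarith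
    have hpq : (p - 1) * 2 ≤ q := by linarith
    have e1 : 0 ≤ p * ((q - (p - 1) * 2) * x1) := by
      apply mul_nonneg (by linarith); apply mul_nonneg <;> linarith
    have e2 : 0 ≤ p * ((q - (p - 1)) * Y) := by
      apply mul_nonneg (by linarith); apply mul_nonneg <;> linarith
    have e3 : 0 ≤ (p * q - (p - 1)) * Z := by
      apply mul_nonneg _ hZ; nlinarith
    have e4 : 0 ≤ ((p - 1) * (q ^ 2 + 1) - p * q) * m := by
      apply mul_nonneg _ hm
      have : 0 ≤ (p - 1) * q * (q - 2) := by
        apply mul_nonneg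
        · apply mul_nonneg <;> linarith
        · linarith
      nlinarith
    have e5 : 0 ≤ (p - 2) * q ^ 2 := by
      apply mul_nonneg (by linarith); positivity
    linarith


theorem aux_lower (p q : ℤ) (hp : 2 ≤ p) (hq : q = 2 * p ^ 2) (S : Set ℕ)
    (hS : ∀ n ∈ S, (n : ℤ) = q ^ 2 + 1 - q ∨ (n : ℤ) = q ^ 2 + 1 - 2 * p ∨ (n : ℤ) = q ^ 2 + 1 - p ∨
      (n : ℤ) = q ^ 2 ∨ (n : ℤ) = q ^ 2 + 1 ∨
      (∃ i : ℤ, 0 ≤ i ∧ i + 2 ≤ 2 * p ∧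
        (n : ℤ) = (i + 1) * p * (q ^ 2 + 1 - q) - i * (q ^ 2 + 1) - 1) ∨
      (∃ j : ℤ, 0 ≤ j ∧ j + 2 ≤ p ∧
        (n : ℤ) = (2 * j + 1) * p * (q ^ 2 + 1 - q) - j * (q ^ 2 + 1) - p))
    (n : ℕ) (hn : n ∈ AddSubmonoid.closure S) :
    (n : ℤ) ≠ (q - 2) * (q ^ 2 + 1) + 1 := by
  have key : ∃ X x1 Y Z W I V v : ℤ, 0 ≤ X ∧ 0 ≤ x1 ∧ 0 ≤ Z ∧ 0 ≤ W ∧ 0 ≤ I ∧ 0 ≤ v ∧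
      I ≤ (2 * p - 1) * Z ∧ V ≤ (p - 1) * v ∧ v ≤ Y ∧ v ≤ V ∧ p * (I + 2 * V - v) ≤ X ∧
      (n : ℤ) + (X * q + 2 * p * x1 + p * Y + Z) =
      (X + x1 + Y + Z + W - I - V) * (q ^ 2 + 1) := by
    induction hn using AddSubmonoid.closure_induction with
    | mem x hx =>
      rcases hS x hx with h | h | h | h | h | ⟨i, hi, hi', h⟩ | ⟨j, hj, hj', h⟩
      · refine ⟨1, 0, 0, 0, 0, 0, 0, 0, ?_⟩; simp; linarith
      · refine ⟨0, 1, 0, 0, 0, 0, 0, 0, ?_⟩; simp; linarith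
      · refine ⟨0, 0, 1, 0, 0, 0, 0, 0, ?_⟩; simp; linarith
      · refine ⟨0, 0, 0, 1, 0, 0, 0, 0, ?_⟩; simp; constructor <;> linarith
      · refine ⟨0, 0, 0, 0, 1, 0, 0, 0, ?_⟩; simp; linarith
      · refine ⟨(i + 1) * p, 0, 0, 1, 0, i + 1, 0, 0, by positivity, le_rfl, by norm_num, le_rfl,
          by linarith, le_rfl, by linarith, by simp, le_rfl, le_rfl, by linarith, ?_⟩
        rw [h]; ring
      · refine ⟨(2 * j + 1) * p, 0, 1, 0, 0, 0, j + 1, 1, by positivity, le_rfl, le_rfl, le_rfl,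
          le_rfl, by norm_num, by simp, by linarith, le_rfl, by linarith, by linarith, ?_⟩
        rw [h]; ring
    | zero => exact ⟨0, 0, 0, 0, 0, 0, 0, 0, by simp⟩
    | add x y _ _ h1 h2 =>
      obtain ⟨X, x1, Y, Z, W, I, V, v, a1, a2, a3, a4, a5, a6, a7, a8, a9, a10, a11, a12⟩ := h1
      obtain ⟨X', x1', Y', Z', W', I', V', v', b1, b2, b3, b4, b5, b6, b7, b8, b9, b10, b11, b12⟩ := h2
      refine ⟨X + X', x1 + x1', Y + Y', Z + Z', W + W', I + I', V + V', v + v', by linarith,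
        by linarith, by linarith, by linarith, by linarith, by linarith, by linarith, by linarith,
        by linarith, by linarith, by linarith, ?_⟩
      push_cast
      linarith
  obtain ⟨X, x1, Y, Z, W, I, V, v, a1, a2, a3, a4, a5, a6, a7, a8, a9, a10, a11, a12⟩ := key
  intro hF
  rw [hF] at a12
  exact aux_F p q X x1 Y Z W I V v hp hq a1 a2 a3 a4 a5 a6 a7 a8 a9 a10 a11 a12

theorem aux_count (H : AddSubmonoid ℕ) (F : ℕ) (hF : F ∉ H)
    (h : ∀ n, n ∈ H ∨ ∃ m ∈ H, m + n = F) : {n : ℕ | n ∉ H}.ncard = (F + 1) / 2 := by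
  classical
  have e : {n : ℕ | n ∉ H} = (((Finset.range (F + 1)).filter (· ∉ H) : Finset ℕ) : Set ℕ) := by
    ext n
    simp only [Set.mem_ofPred_eq, Finset.coe_filter, Finset.mem_range]
    constructor
    · intro hn
      rcases h n with h' | ⟨m, _, h'⟩
      · exact absurd h' hn
      · exact ⟨by omega, hn⟩
    · exact fun h => h.2
  rw [e, Set.ncard_coe_finset]
  have h1 := Finset.card_filter_add_card_filter_not (s := Finset.range (F + 1)) (· ∈ H)
  have h2 : ((Finset.range (F + 1)).filter (· ∈ H)).card =
      ((Finset.range (F + 1)).filter (· ∉ H)).card := by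
    refine Finset.card_bij' (fun n _ => F - n) (fun n _ => F - n) ?_ ?_ ?_ ?_
    · intro n hn
      simp only [Finset.mem_filter, Finset.mem_range] at hn ⊢
      refine ⟨by omega, fun hc => hF ?_⟩
      have := H.add_mem hn.2 hc
      rwa [show n + (F - n) = F by omega] at this
    · intro n hn
      simp only [Finset.mem_filter, Finset.mem_range] at hn ⊢
      refine ⟨by omega, ?_⟩
      rcases h n with h' | ⟨m, hm, h'⟩
      · exact absurd h' hn.2
      · rwa [show F - n = m by omega]
    · intro n hn
      simp only [Finset.mem_filter, Finset.mem_range] at hn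
      omega
    · intro n hn
      simp only [Finset.mem_filter, Finset.mem_range] at hn
      omega
  rw [Finset.card_range] at h1
  omega

/-- The numerical semigroup `H` generated by `g₀ = q²−q+1`, `g₁ = q²−2q₀+1`,
`g₂ = q²−q₀+1`, `g₃ = q²`, `g₄ = q²+1`, `f_i = (i+1)q₀g₀ − i·g₄ − 1`
(`i = 0,…,2q₀−2`) and `h_j = (2j+1)q₀g₀ − j·g₄ − q₀` (`j = 0,…,q₀−2`) has
exactly `q(q−1)²/2` gaps. -/
theorem stmt_10 (s : ℕ) (hs : 1 ≤ s) (q₀ q g₀ g₁ g₂ g₃ g₄ : ℕ)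
    (hq₀ : q₀ = 2 ^ s) (hq : q = 2 * q₀ ^ 2)
    (hg₀ : g₀ = q ^ 2 - q + 1) (hg₁ : g₁ = q ^ 2 - 2 * q₀ + 1)
    (hg₂ : g₂ = q ^ 2 - q₀ + 1) (hg₃ : g₃ = q ^ 2) (hg₄ : g₄ = q ^ 2 + 1)
    (H : AddSubmonoid ℕ)
    (hH : H = AddSubmonoid.closure
      ({g₀, g₁, g₂, g₃, g₄} ∪
        {x | ∃ i : ℕ, i + 2 ≤ 2 * q₀ ∧ x = (i + 1) * q₀ * g₀ - i * g₄ - 1} ∪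
        {x | ∃ j : ℕ, j + 2 ≤ q₀ ∧ x = (2 * j + 1) * q₀ * g₀ - j * g₄ - q₀})) :
    {n : ℕ | n ∉ H}.ncard = q * (q - 1) ^ 2 / 2 := by
  have hp : 2 ≤ q₀ := by
    rw [hq₀]; calc 2 = 2 ^ 1 := rfl
      _ ≤ 2 ^ s := Nat.pow_le_pow_right (by norm_num) hs
  clear hq₀ hs
  have hq4 : 4 * q₀ ≤ q := by nlinarith
  have hqq : 8 * q ≤ q ^ 2 := by nlinarith
  have i0 : g₀ + q = q ^ 2 + 1 := by omega
  have i1 : g₁ + 2 * q₀ = q ^ 2 + 1 := by omega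
  have i2 : g₂ + q₀ = q ^ 2 + 1 := by omega
  have ig : g₄ ≤ 2 * g₀ := by omega
  have hpg : g₄ + 1 ≤ q₀ * g₀ := by nlinarith
  have fle : ∀ i, i * g₄ + 1 ≤ (i + 1) * q₀ * g₀ := by
    intro i
    have : i * (g₄ + 1) ≤ i * (q₀ * g₀) := Nat.mul_le_mul_left _ hpg
    nlinarith
  have hle : ∀ j, j * g₄ + q₀ ≤ (2 * j + 1) * q₀ * g₀ := by
    intro j
    have : j * (g₄ + 1) ≤ j * (q₀ * g₀) := Nat.mul_le_mul_left _ hpg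
    have : q₀ * 1 ≤ q₀ * g₀ := Nat.mul_le_mul_left _ (by omega)
    nlinarith
  have z0 : (g₀ : ℤ) = q ^ 2 + 1 - q := by
    have : (g₀ : ℤ) + q = q ^ 2 + 1 := by exact_mod_cast i0
    linarith
  have z1 : (g₁ : ℤ) = q ^ 2 + 1 - 2 * q₀ := by
    have : (g₁ : ℤ) + 2 * q₀ = q ^ 2 + 1 := by exact_mod_cast i1
    linarith
  have z2 : (g₂ : ℤ) = q ^ 2 + 1 - q₀ := by
    have : (g₂ : ℤ) + q₀ = q ^ 2 + 1 := by exact_mod_cast i2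
    linarith
  have z4 : (g₄ : ℤ) = q ^ 2 + 1 := by rw [hg₄]; push_cast; ring
  obtain ⟨r, hr⟩ := Nat.exists_eq_add_of_le (show 2 ≤ q by omega)
  have hF : r * (q ^ 2 + 1) + 1 ∉ H := by
    intro hmem
    rw [hH] at hmem
    refine aux_lower q₀ q (by exact_mod_cast hp) (by exact_mod_cast hq) _ ?_ _ hmem ?_
    · intro n hn
      simp only [Set.mem_union, Set.mem_insert_iff, Set.mem_singleton_iff, Set.mem_ofPred_eq] at hn
      rcases hn with ((rfl | rfl | rfl | rfl | rfl) | ⟨i, hi, hn⟩) | ⟨j, hj, hn⟩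
      · left; exact z0
      · right; left; exact z1
      · right; right; left; exact z2
      · right; right; right; left; rw [hg₃]; push_cast; ring
      · right; right; right; right; left; exact z4
      · right; right; right; right; right; left
        refine ⟨i, by positivity, by exact_mod_cast hi, ?_⟩
        have h1 : n + (i * g₄ + 1) = (i + 1) * q₀ * g₀ := by have := fle i; omega
        have h2 : (n : ℤ) + (i * g₄ + 1) = (i + 1) * q₀ * g₀ := by exact_mod_cast h1
        rw [← z0, ← z4]; linarith
      · right; right; right; right; right; right
        refine ⟨j, by positivity, by exact_mod_cast hj, ?_⟩
        have h1 : n + (j * g₄ + q₀) = (2 * j + 1) * q₀ * g₀ := by have := hle j; omega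
        have h2 : (n : ℤ) + (j * g₄ + q₀) = (2 * j + 1) * q₀ * g₀ := by exact_mod_cast h1
        rw [← z0, ← z4]; linarith
    · have : (q : ℤ) - 2 = r := by rw [hr]; push_cast; ring
      rw [this]; push_cast; ring
  have hsub : ({g₀, g₁, g₂, g₃, g₄} ∪
        {x | ∃ i : ℕ, i + 2 ≤ 2 * q₀ ∧ x = (i + 1) * q₀ * g₀ - i * g₄ - 1} ∪
        {x | ∃ j : ℕ, j + 2 ≤ q₀ ∧ x = (2 * j + 1) * q₀ * g₀ - j * g₄ - q₀} : Set ℕ) ⊆ H := by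
    rw [hH]; exact AddSubmonoid.subset_closure
  have m0 : g₀ ∈ H := hsub (by simp)
  have m1 : g₁ ∈ H := hsub (by simp)
  have m2 : g₂ ∈ H := hsub (by simp)
  have m3 : g₃ ∈ H := hsub (by simp)
  have m4 : g₄ ∈ H := hsub (by simp)
  have mf : ∀ i : ℕ, i + 2 ≤ 2 * q₀ → (i + 1) * q₀ * g₀ - i * g₄ - 1 ∈ H :=
    fun i hi => hsub (Or.inl (Or.inr ⟨i, hi, rfl⟩))
  have mh : ∀ j : ℕ, j + 2 ≤ q₀ → (2 * j + 1) * q₀ * g₀ - j * g₄ - q₀ ∈ H :=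
    fun i hi => hsub (Or.inr ⟨i, hi, rfl⟩)
  clear hH hsub
  have hup : ∀ n, n ∈ H ∨ ∃ m ∈ H, m + n = r * (q ^ 2 + 1) + 1 := by
    intro n
    have hdual := aux_dual (fun a b => ∃ n ∈ H, n + b = a * g₄) q₀ q hp hq
      (by
        rintro a b a' b' ⟨x, hx, h1⟩ ⟨y, hy, h2⟩
        exact ⟨x + y, H.add_mem hx hy, by rw [add_mul]; omega⟩)
      ⟨0, H.zero_mem, by simp⟩ ⟨g₃, m3, by omega⟩ ⟨g₂, m2, by omega⟩ ⟨g₁, m1, by omega⟩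
      ⟨g₀, m0, by omega⟩
      (by
        intro i a hi ha
        refine ⟨_, mf i hi, ?_⟩
        have h1 := fle i
        have h3 : (a + i) * g₄ = (i + 1) * q₀ * (g₀ + q) := by rw [ha, i0, hg₄]; ring
        rw [add_mul, mul_add] at h3
        omega)
      (by
        intro i a hi ha
        refine ⟨_, mh i hi, ?_⟩
        have h1 := hle i
        have h3 : (a + i) * g₄ = (2 * i + 1) * q₀ * (g₀ + q) := by rw [ha, i0, hg₄]; ring
        rw [add_mul, mul_add] at h3
        omega)
    have hmul : ∀ k x, x ∈ H → k * g₄ + x ∈ H := fun k x hx =>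
      H.add_mem (by simpa using H.nsmul_mem m4 k) hx
    obtain ⟨a, b, hb, hab⟩ : ∃ a b, b ≤ q ^ 2 ∧ n + b = a * g₄ := by
      refine ⟨(n + q ^ 2) / g₄, q ^ 2 - (n + q ^ 2) % g₄, by omega, ?_⟩
      have h1 := Nat.div_add_mod (n + q ^ 2) g₄
      have h2 := Nat.mod_lt (n + q ^ 2) (show 0 < g₄ by omega)
      rw [mul_comm] at h1
      omega
    obtain ⟨a1, a2, haa, ⟨x, hx, hx'⟩, ⟨y, hy, hy'⟩⟩ := hdual b (q ^ 2 - b) (by omega)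
    by_cases hc : a1 ≤ a
    · left
      obtain ⟨k, rfl⟩ := Nat.exists_eq_add_of_le hc
      have := hmul k x hx
      rw [add_mul] at hab
      rwa [show n = k * g₄ + x by omega]
    · right
      obtain ⟨k, rfl⟩ := Nat.exists_eq_add_of_le (show a + 1 ≤ a1 by omega)
      refine ⟨k * g₄ + y, hmul k y hy, ?_⟩
      have h5 : (a + 1 + k + a2) * g₄ = (2 + r) * g₄ := by rw [haa, hr]
      rw [← hg₄]
      simp only [add_mul] at h5
      omega
  rw [aux_count H _ hF hup]
  congr 1
  have hq1 : q - 1 = r + 1 := by omega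
  rw [hq1, hr]
  ring
end

section
/- Let s ≥ 1 be an integer, q₀ = 2^s and q = 2q₀². Let H be the numerical semigroup generated by g₀ = q²−q+1, g₁ = q²−2q₀+1, g₂ = q²−q₀+1, g₃ = q², g₄ = q²+1, f_i = (i+1)q₀g₀ − i·g₄ − 1 for i = 0,…,2q₀−2, and h_j = (2j+1)q₀g₀ − j·g₄ − q₀ for j = 0,…,q₀−2. Let φ : {0,…,q²−q} → ℕ be defined by: for 0 ≤ i ≤ q(q−2)/2, writing i = lq + kq₀ + j with 0 ≤ j ≤ q₀−1, 0 ≤ k ≤ 2q₀−1, l ≥ 0, set φ(i) = l if j = 0 and k = 0; φ(i) = l + 1 + max{q − q₀(k+2l+2), 0} if j = 0 and k ≠ 0; φ(i) = l + 1 + max{q − q₀(⌈k/2⌉+j+l+1), 0} if j ≠ 0; and for q(q−2)/2 + 1 ≤ i ≤ q²−q, writing q² − q − i = lq + kq₀ + j with the same ranges, set φ(i) = q − l − 1 − max{q − q₀(k+2l+1), 0} if j = q₀−1 and φ(i) = q − l − 1 − max{q − q₀(⌈k/2⌉+j+l+1), 0} if j ≠ q₀−1. Then the Apéry set Ap(H)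 = { z ∈ H : z − g₀ ∉ H } equals { φ(i)·g₀ + i : 0 ≤ i ≤ q² − q } = { φ(i)·g₀ + i : 0 ≤ i ≤ g₀ − 1 }. -/
def ApLow (p q l k j C : ℤ) : Prop :=
  l ≤ C ∧ (j = 0 → k ≠ 0 → l + 1 ≤ C ∧ l + 1 + (q - p * (k + 2 * l + 2)) ≤ C) ∧
  (j ≠ 0 → l + 1 ≤ C ∧ ∀ m : ℤ, k ≤ 2 * m → 2 * m ≤ k + 1 →
    l + 1 + (q - p * (m + j + l + 1)) ≤ C)

def ApHigh (p q l k j C : ℤ) : Prop :=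
  (j = p - 1 → q - l - 1 ≤ C ∨ q - l - 1 - (q - p * (k + 2 * l + 1)) ≤ C) ∧
  (j ≠ p - 1 → ∀ m : ℤ, k ≤ 2 * m → 2 * m ≤ k + 1 →
    (q - l - 1 ≤ C ∨ q - l - 1 - (q - p * (m + j + l + 1)) ≤ C))

theorem ap_low_of_D {p q l k j b D : ℤ} (hp : 2 ≤ p) (hq : q = 2 * p * p)
    (hb0 : l ≤ b) (hb : ¬ (j = 0 ∧ k = 0) → l + 1 ≤ b) (hD : 0 ≤ D)
    (h1 : j = 0 → k ≠ 0 → 2 * p - (k + 2 * l + 2) ≤ D)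
    (h2 : j ≠ 0 → ∀ m : ℤ, k ≤ 2 * m → 2 * m ≤ k + 1 → 2 * p - (m + j + l + 1) ≤ D) :
    ApLow p q l k j (b + D * p) := by
  have hDp : 0 ≤ D * p := mul_nonneg hD (by linarith)
  refine ⟨by linarith, fun hj hk => ?_, fun hj => ?_⟩
  · have := hb (by tauto)
    refine ⟨by linarith, ?_⟩
    have := mul_le_mul_of_nonneg_right (h1 hj hk) (by linarith : (0:ℤ) ≤ p)
    nlinarith
  · have := hb (by tauto)
    refine ⟨by linarith, fun m hm1 hm2 => ?_⟩
    have := mul_le_mul_of_nonneg_right (h2 hj m hm1 hm2) (by linarith : (0:ℤ) ≤ p)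
    nlinarith

theorem ap_pos_of {p a c : ℤ} (hp : 0 < p) (h : p * a = c) (hc : 0 < c) : 1 ≤ a := by
  by_contra hh
  have : p * a ≤ 0 := mul_nonpos_of_nonneg_of_nonpos hp.le (by linarith)
  linarith

theorem ap_nonneg_of {p a c : ℤ} (h : p * a = c) (hc : -p < c) (hp : 0 < p := by linarith) :
    0 ≤ a := by
  by_contra hh
  have : p * a ≤ p * (-1) := mul_le_mul_of_nonneg_left (by omega) hp.le
  linarith

theorem ap_low_zero {p q l k j b x y d : ℤ} (hp : 2 ≤ p) (hq : q = 2 * p * p)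
    (hj0 : 0 ≤ j) (hj : j + 1 ≤ p) (hk0 : 0 ≤ k) (hk : k + 1 ≤ 2 * p) (hl : 0 ≤ l)
    (hx : 0 ≤ x) (hy : 0 ≤ y) (hd : 0 ≤ d)
    (he : l * q + k * p + j = b * q - x - y * p)
    (h2 : 2 * x + y ≤ 2 * b + 2 * d) (h1 : 2 * x + y ≤ 2 * b + d ∨ 1 ≤ x) :
    ApLow p q l k j (b + d * p) := by
  obtain ⟨B, rfl⟩ : ∃ B, b = l + B := ⟨b - l, by ring⟩
  obtain ⟨A, hA⟩ : ∃ A, A = 2 * p * B - k - y := ⟨_, rfl⟩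
  have hxA : p * A = x + j := by rw [hA]; subst hq; linarith
  have hA0 : 0 ≤ A := ap_nonneg_of hxA (by linarith)
  have hBA : (2 * p) * B = k + y + A := by linarith
  have hB0 : 0 ≤ B := ap_nonneg_of hBA (by linarith)
  have hy' : y = 2 * p * B - k - A := by linarith
  have hx' : x = p * A - j := by linarith
  have hA1 : j ≠ 0 → 1 ≤ A := fun h => ap_pos_of (by linarith) hxA (by omega)
  have hA1' : 1 ≤ x → 1 ≤ A := fun h => ap_pos_of (by linarith) hxA (by omega)
  have hB1 : ¬ (j = 0 ∧ k = 0) → 1 ≤ B := fun h => by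
    apply ap_pos_of (by linarith) hBA
    by_cases hjj : j = 0
    · have : k ≠ 0 := by tauto
      omega
    · have := hA1 hjj; omega
  refine ap_low_of_D hp hq (by linarith) (fun h => by have := hB1 h; linarith) hd ?_ ?_
  · intro hj hk
    have := hB1 (by tauto)
    rcases h1 with h1 | h1
    · subst hy' hx'
      nlinarith [mul_nonneg (by linarith : 0 ≤ 2 * p - 2) (by linarith : 0 ≤ B - 1), mul_nonneg (by linarith : 0 ≤ 2 * p - 1) hA0]
    · have := hA1' h1
      subst hy' hx'
      nlinarith [mul_nonneg (by linarith : 0 ≤ 2 * p - 2) (by linarith : 0 ≤ B - 1), mul_nonneg (by linarith : 0 ≤ 2 * p - 1) (by linarith : 0 ≤ A - 1)]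
  · intro hj m hm1 hm2
    have := hB1 (by tauto)
    have := hA1 hj
    have : 4 * p - 2 * j - k - 2 * l - 3 ≤ 2 * d := by
      subst hy' hx'
      nlinarith [mul_nonneg (by linarith : 0 ≤ 2 * p - 2) (by linarith : 0 ≤ B - 1), mul_nonneg (by linarith : 0 ≤ 2 * p - 1) (by linarith : 0 ≤ A - 1)]
    omega

theorem ap_low_one {p q l k j b x y d : ℤ} (hp : 2 ≤ p) (hq : q = 2 * p * p)
    (hj0 : 0 ≤ j) (hj : j + 1 ≤ p) (hk0 : 0 ≤ k) (hk : k + 1 ≤ 2 * p) (hl : 0 ≤ l)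
    (hlq : 2 * l ≤ q - 2)
    (hx : 0 ≤ x) (hy : 0 ≤ y) (hd : 0 ≤ d)
    (he : l * q + k * p + j - (q * q - q + 1) = b * q - x - y * p)
    (h2 : 2 * x + y ≤ 2 * b + 2 * d)
    (h1 : (2 * x + y ≤ 2 * b + d ∧ (d = 0 ∨ 1 ≤ y)) ∨ 1 ≤ x) :
    ApLow p q l k j (b + d * p - 1) := by
  obtain ⟨B, rfl⟩ : ∃ B, b = l + B - (q - 1) := ⟨b - l + (q - 1), by ring⟩
  obtain ⟨A, hA⟩ : ∃ A, A = 2 * p * B - k - y := ⟨_, rfl⟩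
  obtain ⟨D, rfl⟩ : ∃ D, d = D + 2 * p := ⟨d - 2 * p, by ring⟩
  have hxA : p * A = x - 1 + j := by rw [hA]; subst hq; linarith
  have hA0 : 0 ≤ A := ap_nonneg_of hxA (by linarith)
  have hBA : (2 * p) * B = k + y + A := by linarith
  have hB0 : 0 ≤ B := ap_nonneg_of hBA (by linarith)
  have hy' : y = 2 * p * B - k - A := by linarith
  have hx' : x = p * A - j + 1 := by linarith
  have hqp : 4 * p ≤ q := by nlinarith
  have heq : l + B - (q - 1) + (D + 2 * p) * p - 1 = (l + B) + D * p := by rw [hq]; ring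
  rw [heq]
  by_cases hx1 : 1 ≤ x
  · have hA1 : j ≠ 0 → 1 ≤ A := fun h => ap_pos_of (by linarith) hxA (by omega)
    have hB1 : ¬ (j = 0 ∧ k = 0) → 1 ≤ B := fun h => by
      apply ap_pos_of (by linarith) hBA
      by_cases hjj : j = 0
      · have : k ≠ 0 := by tauto
        omega
      · have := hA1 hjj; omega
    have hD2 : 2 * q - 4 * p - 2 * j - k - 2 * l + (2 * p - 1) * A + (2 * p - 2) * B ≤ 2 * D := by
      subst hy' hx'; nlinarith
    by_cases hj' : j = 0
    · by_cases hk' : k = 0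
      · have : 0 ≤ (2 * p - 1) * A := mul_nonneg (by linarith) hA0
        have : 0 ≤ (2 * p - 2) * B := mul_nonneg (by linarith) hB0
        exact ap_low_of_D hp hq (by linarith) (fun h => by tauto) (by linarith) (by tauto) (by tauto)
      · have := hB1 (by tauto)
        have : 0 ≤ (2 * p - 1) * A := mul_nonneg (by linarith) hA0
        have : 0 ≤ (2 * p - 2) * (B - 1) := mul_nonneg (by linarith) (by linarith)
        exact ap_low_of_D hp hq (by linarith) (fun h => by linarith) (by linarith)
          (fun _ _ => by linarith) (by tauto)
    · have := hB1 (by tauto)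
      have := hA1 hj'
      have : 0 ≤ (2 * p - 1) * (A - 1) := mul_nonneg (by linarith) (by linarith)
      have : 0 ≤ (2 * p - 2) * (B - 1) := mul_nonneg (by linarith) (by linarith)
      exact ap_low_of_D hp hq (by linarith) (fun h => by linarith) (by linarith)
          (by tauto) (fun _ m _ _ => by linarith)
  · have hx0 : x = 0 := by omega
    obtain ⟨h1, hdy⟩ : 2 * x + y ≤ 2 * (l + B - (q - 1)) + (D + 2 * p) ∧ (D + 2 * p = 0 ∨ 1 ≤ y) := by
      tauto
    have hA0' : A = 0 := by
      by_contra hne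
      have : p * 1 ≤ p * A := mul_le_mul_of_nonneg_left (by omega) (by linarith)
      linarith
    subst hA0'
    have hj1 : j = 1 := by linarith
    have hB1 : 1 ≤ B := by
      by_contra hh
      have : B = 0 := by omega
      subst this
      rcases hdy with h | h <;> linarith
    have : 0 ≤ (2 * p - 2) * (B - 1) := mul_nonneg (by linarith) (by linarith)
    have hD2 : 2 * q - 2 * p - 2 - k - 2 * l + (2 * p - 2) * B ≤ D := by
      subst hy' ; nlinarith
    exact ap_low_of_D hp hq (by linarith) (fun h => by linarith) (by linarith)
          (fun h => by omega) (fun _ m _ _ => by linarith)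

theorem ap_high_zero {p q l k j b x y d : ℤ} (hp : 2 ≤ p) (hq : q = 2 * p * p)
    (hj0 : 0 ≤ j) (hj : j + 1 ≤ p) (hk0 : 0 ≤ k) (hk : k + 1 ≤ 2 * p)
    (hx : 0 ≤ x) (hy : 0 ≤ y) (hd : 0 ≤ d)
    (he : q * q - q - (l * q + k * p + j) = b * q - x - y * p) :
    ApHigh p q l k j (b + d * p) := by
  have hb : 0 ≤ b - (q - 1 - l) := by
    have h : q * (b - (q - 1 - l)) = x + y * p - k * p - j := by linarith
    have hq0 : 0 < q := by nlinarith
    refine ap_nonneg_of h ?_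
    have : 0 ≤ y * p := mul_nonneg hy (by linarith)
    have : (k + 1) * p ≤ (2 * p) * p := mul_le_mul_of_nonneg_right hk (by linarith)
    linarith
  have hdp : 0 ≤ d * p := mul_nonneg hd (by linarith)
  exact ⟨fun _ => Or.inl (by linarith), fun _ _ _ _ => Or.inl (by linarith)⟩

theorem ap_high_aux {p q l B D E : ℤ} (hp : 2 ≤ p) (hq : q = 2 * p * p)
    (hB : 0 ≤ B) (h : 0 ≤ D ∨ E - 2 * p ≤ D) :
    q - l - 1 ≤ (q - 1 - l + B) + D * p ∨ q - l - 1 - (q - p * E) ≤ (q - 1 - l + B) + D * p := by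
  rcases h with h | h
  · left
    have : 0 ≤ D * p := mul_nonneg h (by linarith)
    linarith
  · right
    have := mul_le_mul_of_nonneg_right h (by linarith : 0 ≤ p)
    nlinarith

theorem ap_high_one {p q l k j b x y d : ℤ} (hp : 2 ≤ p) (hq : q = 2 * p * p)
    (hj0 : 0 ≤ j) (hj : j + 1 ≤ p) (hk0 : 0 ≤ k) (hk : k + 1 ≤ 2 * p) (hl : 0 ≤ l)
    (hx : 0 ≤ x) (hy : 0 ≤ y) (hd : 0 ≤ d)
    (he : q * q - q - (l * q + k * p + j) - (q * q - q + 1) = b * q - x - y * p)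
    (h2 : 2 * x + y ≤ 2 * b + 2 * d)
    (h1 : (2 * x + y ≤ 2 * b + d ∧ (d = 0 ∨ 1 ≤ y)) ∨ 1 ≤ x) :
    ApHigh p q l k j (b + d * p - 1) := by
  obtain ⟨B, rfl⟩ : ∃ B, b = (q - 1 - l + B) - (q - 1) := ⟨b + l, by ring⟩
  obtain ⟨A, hA⟩ : ∃ A, A = 2 * p * B + k - y := ⟨_, rfl⟩
  obtain ⟨D, rfl⟩ : ∃ D, d = D + 2 * p := ⟨d - 2 * p, by ring⟩
  have hxA : p * A = x - 1 - j := by rw [hA]; subst hq; linarith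
  have hA0 : -1 ≤ A := by
    have : p * (A + 1) = x - 1 - j + p := by linarith
    have := ap_nonneg_of this (by linarith)
    linarith
  have hBA : (2 * p) * B = A + y - k := by linarith
  have hy' : y = 2 * p * B + k - A := by linarith
  have hx' : x = p * A + j + 1 := by linarith
  have heq : (q - 1 - l + B) - (q - 1) + (D + 2 * p) * p - 1 = (q - 1 - l + B) + D * p := by
    rw [hq]; ring
  rw [heq]
  have hD2 : 2 * j + k + 2 + 2 * l - 4 * p + (2 * p - 1) * A + (2 * p - 2) * B ≤ 2 * D := by
    subst hy' hx'; nlinarith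
  by_cases hA1 : 0 ≤ A
  · have hB0 : 0 ≤ B := ap_nonneg_of hBA (by linarith)
    have : 0 ≤ (2 * p - 1) * A := mul_nonneg (by linarith) hA1
    have : 0 ≤ (2 * p - 2) * B := mul_nonneg (by linarith) hB0
    exact ⟨fun _ => ap_high_aux hp hq hB0 (by omega),
      fun _ m _ _ => ap_high_aux hp hq hB0 (by omega)⟩
  · have hAm : A = -1 := by omega
    subst hAm
    have hx0 : x = 0 := by omega
    have hjp : j = p - 1 := by omega
    obtain ⟨h1', hdy⟩ := h1.resolve_right (by omega)
    -- y = 2pB + k + 1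
    have hB0 : 0 ≤ B := by
      by_contra hh
      have hB : B ≤ -1 := by omega
      have : (2 * p) * B ≤ (2 * p) * (-1) := mul_le_mul_of_nonneg_left hB (by linarith)
      rcases hdy with h | h <;> linarith
    have : 0 ≤ (2 * p - 2) * B := mul_nonneg (by linarith) hB0
    have : k + 2 * l + 1 - 2 * p + (2 * p - 2) * B ≤ D := by
      subst hy' hx'; nlinarith
    exact ⟨fun _ => ap_high_aux hp hq hB0 (by omega), fun h => absurd hjp h⟩

def ApM (p q n : ℤ) : Prop := ∃ b x y d e : ℤ, 0 ≤ x ∧ 0 ≤ y ∧ 0 ≤ d ∧ 0 ≤ e ∧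
  n = b * (q * q + 1) + (d * p + e) * (q * q - q + 1) - x - y * p ∧
  2 * x + y ≤ 2 * b + 2 * d ∧ ((2 * x + y ≤ 2 * b + d ∧ (d = 0 ∨ 1 ≤ y)) ∨ 1 ≤ x)

theorem ApM.add {p q n m : ℤ} (hn : ApM p q n) (hm : ApM p q m) : ApM p q (n + m) := by
  obtain ⟨b, x, y, d, e, hx, hy, hd, he, h, h2, h1⟩ := hn
  obtain ⟨b', x', y', d', e', hx', hy', hd', he', h', h2', h1'⟩ := hm
  refine ⟨b + b', x + x', y + y', d + d', e + e', by omega, by omega, by omega, by omega,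
    by rw [h, h']; ring, by omega, by omega⟩

theorem ap_low_big {p q l k j C : ℤ} (hp : 2 ≤ p) (hq : q = 2 * p * p)
    (hj0 : 0 ≤ j) (hk0 : 0 ≤ k) (hl : 0 ≤ l)
    (hlq : 2 * l ≤ q - 2) (hC : q - 1 ≤ C) : ApLow p q l k j C := by
  have hq8 : 8 ≤ q := by nlinarith
  refine ⟨by linarith, fun hj hk => ⟨by linarith, ?_⟩, fun hj => ⟨by linarith, fun m hm1 hm2 => ?_⟩⟩
  · have : 2 * (k + 2 * l + 2) ≤ p * (k + 2 * l + 2) := mul_le_mul_of_nonneg_right hp (by linarith)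
    linarith
  · have : 2 * (m + j + l + 1) ≤ p * (m + j + l + 1) := mul_le_mul_of_nonneg_right hp (by linarith)
    linarith

theorem ap_high_big {p q l k j C : ℤ} (hl : 0 ≤ l) (hC : q - 1 ≤ C) : ApHigh p q l k j C :=
  ⟨fun _ => Or.inl (by linarith), fun _ _ _ _ => Or.inl (by linarith)⟩

/-- the case of large defect -/
theorem ap_tau_big {p q i b x y d T : ℤ} (hp : 2 ≤ p) (hq : q = 2 * p * p)
    (hi : i ≤ q * q - q) (hT : 2 ≤ T) (hx : 0 ≤ x) (hy : 0 ≤ y)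
    (he : i - T * (q * q - q + 1) = b * q - x - y * p)
    (h2 : 2 * x + y ≤ 2 * b + 2 * d)
    (h1 : 2 * x + y ≤ 2 * b + d ∨ 1 ≤ x) : q - 1 ≤ b + d * p - T := by
  have hq8 : 8 ≤ q := by nlinarith
  have hqp : 4 * p ≤ q := by nlinarith
  obtain ⟨S, rfl⟩ : ∃ S, T = S + 2 := ⟨T - 2, by ring⟩
  have hS : 0 ≤ S := by linarith
  have hb : (S + 1) * ((q - 1) * q) + S + 2 - x - y * p ≤ -b * q := by nlinarith
  have hyq : 0 ≤ y * (p * q - q) := mul_nonneg hy (by nlinarith)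
  have hb2 := mul_le_mul_of_nonneg_left hb (by linarith : 0 ≤ 2 * p - 2)
  by_contra hc
  have hc' : b + d * p - (S + 2) ≤ q - 2 := by omega
  by_cases hx1 : 1 ≤ x
  · have h3 : p * (2 * x + y) ≤ p * (2 * b + 2 * d) := mul_le_mul_of_nonneg_left h2 (by linarith)
    have h4 : -(2 * p - 2) * b + p * (2 * x + y) - 2 * (S + 2) ≤ 2 * (q - 2) := by linarith
    have h5 := mul_le_mul_of_nonneg_right h4 (by linarith : 0 ≤ q)
    -- collect
    have h6 : (2 * p - 2) * ((S + 1) * ((q - 1) * q) + S + 2 - x - y * p) + p * (2 * x + y) * q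
        - 2 * (S + 2) * q ≤ 2 * (q - 2) * q := by linarith
    have h7 : 0 ≤ (x - 1) * (2 * p * q - 2 * p + 2) := mul_nonneg (by linarith) (by nlinarith)
    have h8 : 0 ≤ y * p * (q - 2 * p + 2) := mul_nonneg (mul_nonneg hy (by linarith)) (by linarith)
    have h9 : 0 ≤ S * ((2 * p - 2) * ((q - 1) * q + 1) - 2 * q) := mul_nonneg hS (by nlinarith)
    have h10 : 0 ≤ (p - 2) * (q * (q - 1)) := mul_nonneg (by linarith) (by nlinarith)
    have h11 : 0 ≤ (p - 2) * q := mul_nonneg (by linarith) (by linarith)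
    linarith
  · have hx0 : x = 0 := by omega
    subst hx0
    have h1' := h1.resolve_right (by omega)
    have h3 : p * (2 * 0 + y) ≤ p * (2 * b + d) := mul_le_mul_of_nonneg_left h1' (by linarith)
    have h4 : -(2 * p - 1) * b + p * y - (S + 2) ≤ (q - 2) := by linarith
    have h5 := mul_le_mul_of_nonneg_right h4 (by linarith : 0 ≤ q)
    have hb2 := mul_le_mul_of_nonneg_left hb (by linarith : 0 ≤ 2 * p - 1)
    have h6 : (2 * p - 1) * ((S + 1) * ((q - 1) * q) + S + 2 - y * p) + p * y * q
        - (S + 2) * q ≤ (q - 2) * q := by linarith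
    have h8 : 0 ≤ y * p * (q - 2 * p + 1) := mul_nonneg (mul_nonneg hy (by linarith)) (by linarith)
    have h9 : 0 ≤ S * ((2 * p - 1) * ((q - 1) * q + 1) - q) := mul_nonneg hS (by nlinarith)
    have h10 : 0 ≤ (p - 2) * (q * (q - 1)) := mul_nonneg (by linarith) (by nlinarith)
    nlinarith

theorem ap_t_pos {p q i b x y d t : ℤ} (hp : 2 ≤ p) (hq : q = 2 * p * p)
    (hi : 0 ≤ i) (ht : 1 ≤ t) (hx : 0 ≤ x) (hy : 0 ≤ y) (hd : 0 ≤ d)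
    (he : i + t * (q * q - q + 1) = b * q - x - y * p) : q - 1 ≤ b + d * p + t := by
  have hq8 : 8 ≤ q := by nlinarith
  have hdp : 0 ≤ d * p := mul_nonneg hd (by linarith)
  have hyp : 0 ≤ y * p := mul_nonneg hy (by linarith)
  have : 0 ≤ (t - 1) * (q * q - q + 1) := mul_nonneg (by linarith) (by nlinarith)
  have : 0 ≤ b - (q - 1) := ap_nonneg_of (p := q) (c := b * q - (q * q - q)) (by ring) (by linarith)
  linarith

theorem ap_split {p q n c i : ℤ} (h : ApM p q n) (hn : n = c * (q * q - q + 1) + i) :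
    ∃ b x y d t : ℤ, 0 ≤ x ∧ 0 ≤ y ∧ 0 ≤ d ∧ b + d * p + t ≤ c ∧
      i + t * (q * q - q + 1) = b * q - x - y * p ∧ 2 * x + y ≤ 2 * b + 2 * d ∧
      ((2 * x + y ≤ 2 * b + d ∧ (d = 0 ∨ 1 ≤ y)) ∨ 1 ≤ x) := by
  obtain ⟨b, x, y, d, e, hx, hy, hd, he, h, h2, h1⟩ := h
  refine ⟨b, x, y, d, c - b - d * p - e, hx, hy, hd, by linarith, ?_, h2, h1⟩
  have : c * (q * q - q + 1) + i = b * (q * q + 1) + (d * p + e) * (q * q - q + 1) - x - y * p := by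
    rw [← hn, h]
  linarith

theorem ApLow.mono {p q l k j C C' : ℤ} (h : ApLow p q l k j C) (hC : C ≤ C') :
    ApLow p q l k j C' := by
  obtain ⟨h1, h2, h3⟩ := h
  refine ⟨by omega, fun a b => ?_, fun a => ⟨?_, fun m h4 h5 => ?_⟩⟩
  · have := h2 a b
    exact ⟨by linarith [this.1], by linarith [this.2]⟩
  · linarith [(h3 a).1]
  · linarith [(h3 a).2 m h4 h5]

theorem ApHigh.mono {p q l k j C C' : ℤ} (h : ApHigh p q l k j C) (hC : C ≤ C') :
    ApHigh p q l k j C' := by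
  obtain ⟨h1, h2⟩ := h
  refine ⟨fun a => ?_, fun a m h4 h5 => ?_⟩
  · rcases h1 a with h | h
    · left; linarith
    · right; linarith
  · rcases h2 a m h4 h5 with h | h
    · left; linarith
    · right; linarith

theorem ap_low_main {p q l k j c n : ℤ} (hp : 2 ≤ p) (hq : q = 2 * p * p)
    (hj0 : 0 ≤ j) (hj : j + 1 ≤ p) (hk0 : 0 ≤ k) (hk : k + 1 ≤ 2 * p) (hl : 0 ≤ l)
    (hi : 2 * (l * q + k * p + j) ≤ q * (q - 2))
    (h : ApM p q n) (hn : n = c * (q * q - q + 1) + (l * q + k * p + j)) :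
    ApLow p q l k j c := by
  obtain ⟨b, x, y, d, t, hx, hy, hd, hc, he, h2, h1⟩ := ap_split h hn
  have hq8 : 8 ≤ q := by nlinarith
  have hkp : 0 ≤ k * p := mul_nonneg hk0 (by linarith)
  have hlq' : 0 ≤ l * q := mul_nonneg hl (by linarith)
  have hlq : 2 * l ≤ q - 2 := by
    by_contra hh
    have : q * (q - 2 + 1) ≤ q * (2 * l) := mul_le_mul_of_nonneg_left (by omega) (by linarith)
    linarith
  refine ApLow.mono ?_ hc
  rcases (by omega : 1 ≤ t ∨ t = 0 ∨ t = -1 ∨ t ≤ -2) with ht | ht | ht | ht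
  · exact ap_low_big hp hq hj0 hk0 hl hlq (ap_t_pos hp hq (by linarith) ht hx hy hd he)
  · subst ht
    rw [add_zero]
    exact ap_low_zero hp hq hj0 hj hk0 hk hl hx hy hd (by linarith) h2 (by tauto)
  · subst ht
    exact ap_low_one hp hq hj0 hj hk0 hk hl hlq hx hy hd (by linarith) h2 h1
  · refine ap_low_big hp hq hj0 hk0 hl hlq ?_
    have := ap_tau_big (i := l * q + k * p + j) (T := -t) (d := d) hp hq (by nlinarith) (by linarith) hx hy (by rw [← he]; ring) h2 (by tauto)
    linarith

theorem ap_high_main {p q l k j c n : ℤ} (hp : 2 ≤ p) (hq : q = 2 * p * p)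
    (hj0 : 0 ≤ j) (hj : j + 1 ≤ p) (hk0 : 0 ≤ k) (hk : k + 1 ≤ 2 * p) (hl : 0 ≤ l)
    (hi : l * q + k * p + j ≤ q * q - q)
    (h : ApM p q n) (hn : n = c * (q * q - q + 1) + (q * q - q - (l * q + k * p + j))) :
    ApHigh p q l k j c := by
  obtain ⟨b, x, y, d, t, hx, hy, hd, hc, he, h2, h1⟩ := ap_split h hn
  have hq8 : 8 ≤ q := by nlinarith
  have hkp : 0 ≤ k * p := mul_nonneg hk0 (by linarith)
  have hlq' : 0 ≤ l * q := mul_nonneg hl (by linarith)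
  refine ApHigh.mono ?_ hc
  rcases (by omega : 1 ≤ t ∨ t = 0 ∨ t = -1 ∨ t ≤ -2) with ht | ht | ht | ht
  · exact ap_high_big hl (ap_t_pos hp hq (by linarith) ht hx hy hd he)
  · subst ht
    rw [add_zero]
    exact ap_high_zero hp hq hj0 hj hk0 hk hx hy hd (by linarith)
  · subst ht
    exact ap_high_one hp hq hj0 hj hk0 hk hl hx hy hd (by linarith) h2 h1
  · refine ap_high_big hl ?_
    have := ap_tau_big (i := q * q - q - (l * q + k * p + j)) (T := -t) (d := d) hp hq (by nlinarith) (by linarith) hx hy (by rw [← he]; ring) h2 (by tauto)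
    linarith

def ApVal (p q E a b C : ℤ) : Prop := (2 * p ≤ E ∧ C = a) ∨ (E ≤ 2 * p ∧ C = a + b * (q - p * E))

def ApLowVal (p q l k j C : ℤ) : Prop :=
  (j = 0 ∧ k = 0 ∧ C = l) ∨ (j = 0 ∧ k ≠ 0 ∧ ApVal p q (k + 2 * l + 2) (l + 1) 1 C) ∨
  (j ≠ 0 ∧ ∃ m : ℤ, k ≤ 2 * m ∧ 2 * m ≤ k + 1 ∧ ApVal p q (m + j + l + 1) (l + 1) 1 C)

def ApHighVal (p q l k j C : ℤ) : Prop :=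
  (j = p - 1 ∧ ApVal p q (k + 2 * l + 1) (q - l - 1) (-1) C) ∨
  (j ≠ p - 1 ∧ ∃ m : ℤ, k ≤ 2 * m ∧ 2 * m ≤ k + 1 ∧
    ApVal p q (m + j + l + 1) (q - l - 1) (-1) C)

theorem ApLowVal.le {p q l k j C c : ℤ} (h : ApLowVal p q l k j C) (hc : ApLow p q l k j c) :
    C ≤ c := by
  obtain ⟨h1, h2, h3⟩ := hc
  rcases h with ⟨_, _, rfl⟩ | ⟨hj, hk, ⟨_, rfl⟩ | ⟨_, rfl⟩⟩ | ⟨hj, m, hm, hm', ⟨_, rfl⟩ | ⟨_, rfl⟩⟩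
  · exact h1
  · exact (h2 hj hk).1
  · rw [one_mul]; exact (h2 hj hk).2
  · exact (h3 hj).1
  · rw [one_mul]; exact (h3 hj).2 m hm hm'

theorem ApHighVal.le {p q l k j C c : ℤ} (hp : 2 ≤ p) (hq : q = 2 * p * p)
    (h : ApHighVal p q l k j C) (hc : ApHigh p q l k j c) :
    C ≤ c := by
  have key : ∀ E, (q - l - 1 ≤ c ∨ q - l - 1 - (q - p * E) ≤ c) →
      ApVal p q E (q - l - 1) (-1) C → C ≤ c := by
    intro E h0 h'
    rcases h' with ⟨hE, rfl⟩ | ⟨hE, rfl⟩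
    · have := mul_le_mul_of_nonneg_left hE (by linarith : 0 ≤ p)
      rcases h0 with h0 | h0 <;> linarith
    · have := mul_le_mul_of_nonneg_left hE (by linarith : 0 ≤ p)
      rcases h0 with h0 | h0 <;> linarith
  obtain ⟨h1, h2⟩ := hc
  rcases h with ⟨hj, h⟩ | ⟨hj, m, hm, hm', h⟩
  · exact key _ (h1 hj) h
  · exact key _ (h2 hj m hm hm') h

theorem ap_zmul {K : AddSubmonoid ℤ} {n z : ℤ} (hn : 0 ≤ n) (hz : z ∈ K) : n * z ∈ K := by
  lift n to ℕ using hn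
  have := K.nsmul_mem hz n
  simpa using this

theorem ap_A {p q a x y : ℤ} {K : AddSubmonoid ℤ} (hG1 : q * q - 2 * p + 1 ∈ K)
    (hG2 : q * q - p + 1 ∈ K) (hG3 : q * q ∈ K) (hG4 : q * q + 1 ∈ K)
    (hx : 0 ≤ x) (hy : 0 ≤ y) (h : 2 * x + y ≤ 2 * a) : a * (q * q + 1) - x - y * p ∈ K := by
  obtain ⟨u, hu | hu⟩ : ∃ u, y = 2 * u ∨ y = 2 * u + 1 := ⟨y / 2, by omega⟩
  · have := K.add_mem (K.add_mem (ap_zmul hx hG3) (ap_zmul (by omega : 0 ≤ u) hG1))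
      (ap_zmul (by omega : 0 ≤ a - x - u) hG4)
    convert this using 1
    rw [hu]; ring
  · have := K.add_mem (K.add_mem (K.add_mem (ap_zmul hx hG3) (ap_zmul (by omega : 0 ≤ u) hG1))
      (ap_zmul (by omega : 0 ≤ a - x - u - 1) hG4)) hG2
    convert this using 1
    rw [hu]; ring

theorem ap_low_mem {p q l k j C : ℤ} {K : AddSubmonoid ℤ} (hp : 2 ≤ p) (hq : q = 2 * p * p)
    (hG1 : q * q - 2 * p + 1 ∈ K)
    (hG2 : q * q - p + 1 ∈ K) (hG3 : q * q ∈ K) (hG4 : q * q + 1 ∈ K)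
    (hf : ∀ i : ℤ, 0 ≤ i → i + 2 ≤ 2 * p → (i + 1) * p * (q * q - q + 1) - i * (q * q + 1) - 1 ∈ K)
    (hh : ∀ i : ℤ, 0 ≤ i → i + 2 ≤ p →
      (2 * i + 1) * p * (q * q - q + 1) - i * (q * q + 1) - p ∈ K)
    (hj0 : 0 ≤ j) (hj : j + 1 ≤ p) (hk0 : 0 ≤ k) (hk : k + 1 ≤ 2 * p) (hl : 0 ≤ l)
    (h : ApLowVal p q l k j C) : C * (q * q - q + 1) + (l * q + k * p + j) ∈ K := by
  have hA := fun a x y => ap_A (a := a) (x := x) (y := y) hG1 hG2 hG3 hG4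
  rcases h with ⟨rfl, rfl, rfl⟩ | ⟨rfl, hk', ⟨hE, rfl⟩ | ⟨hE, rfl⟩⟩ | ⟨hj', m, hm, hm', ⟨hE, rfl⟩ | ⟨hE, rfl⟩⟩
  · convert hA C 0 0 le_rfl le_rfl (by linarith) using 1
    ring
  · convert hA (l + 1) 0 (2 * p - k) le_rfl (by linarith) (by linarith) using 1
    rw [hq]; ring
  · obtain ⟨m, hm⟩ : ∃ m, k + 2 * l + 2 = 2 * p - (2 * m + 1) ∨ k + 2 * l + 2 = 2 * p - 2 * m :=
      ⟨(2 * p - (k + 2 * l + 2)) / 2, by omega⟩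
    rcases hm with hm | hm
    · convert K.add_mem (hh m (by omega) (by omega))
        (hA (l + 1 + m) 0 (2 * p - k - 1) le_rfl (by omega) (by omega)) using 1
      rw [hm, hq]; ring
    · by_cases hm0 : m = 0
      · subst hm0
        convert hA (l + 1) 0 (2 * p - k) le_rfl (by linarith) (by linarith) using 1
        rw [hm, hq]; ring
      · convert K.add_mem (K.add_mem (hh (m - 1) (by omega) (by omega)) (hh 0 (by omega) (by omega)))
          (hA (l + m) 0 (2 * p - k - 2) le_rfl (by omega) (by omega)) using 1
        rw [hm, hq]; ring
  · convert hA (l + 1) (p - j) (2 * p - 1 - k) (by omega) (by omega) (by omega) using 1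
    rw [hq]; ring
  · obtain ⟨d, hd⟩ : ∃ d, m + j + l + 1 = 2 * p - d := ⟨2 * p - (m + j + l + 1), by ring⟩
    by_cases hd0 : d = 0
    · convert hA (l + 1) (p - j) (2 * p - 1 - k) (by omega) (by omega) (by omega) using 1
      rw [hd, hd0, hq]; ring
    · convert K.add_mem (hf (d - 1) (by omega) (by omega))
          (hA (l + d) (p - j - 1) (2 * p - 1 - k) (by omega) (by omega) (by omega)) using 1
      rw [hd, hq]; ring

theorem ap_high_mem {p q l k j C : ℤ} {K : AddSubmonoid ℤ} (hp : 2 ≤ p) (hq : q = 2 * p * p)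
    (hG1 : q * q - 2 * p + 1 ∈ K)
    (hG2 : q * q - p + 1 ∈ K) (hG3 : q * q ∈ K) (hG4 : q * q + 1 ∈ K)
    (hf : ∀ i : ℤ, 0 ≤ i → i + 2 ≤ 2 * p → (i + 1) * p * (q * q - q + 1) - i * (q * q + 1) - 1 ∈ K)
    (hh : ∀ i : ℤ, 0 ≤ i → i + 2 ≤ p →
      (2 * i + 1) * p * (q * q - q + 1) - i * (q * q + 1) - p ∈ K)
    (hj0 : 0 ≤ j) (hj : j + 1 ≤ p) (hk0 : 0 ≤ k) (hk : k + 1 ≤ 2 * p) (hl : 0 ≤ l)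
    (hlq : 2 * l ≤ q - 2)
    (h : ApHighVal p q l k j C) :
    C * (q * q - q + 1) + (q * q - q - (l * q + k * p + j)) ∈ K := by
  have hA := fun a x y => ap_A (a := a) (x := x) (y := y) hG1 hG2 hG3 hG4
  have hqp : 4 * p ≤ q := by nlinarith
  have plain : (q - l - 1) * (q * q - q + 1) + (q * q - q - (l * q + k * p + j)) ∈ K := by
    convert hA (q - l - 1) j k hj0 hk0 (by linarith) using 1
    ring
  rcases h with ⟨hj', ⟨hE, rfl⟩ | ⟨hE, rfl⟩⟩ | ⟨hj', m, hm, hm', ⟨hE, rfl⟩ | ⟨hE, rfl⟩⟩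
  · exact plain
  · by_cases hE1 : k + 2 * l + 1 = 2 * p
    · rw [hE1]
      convert plain using 1
      rw [hq]; ring
    by_cases hE2 : k + 2 * l + 1 = 2 * p - 1
    · convert K.add_mem (hf (2 * p - 2) (by omega) (by omega))
        (hA (2 * p - 2 - l) j k (by omega) (by omega) (by omega)) using 1
      rw [hE2, hq]; ring
    obtain ⟨m, hm⟩ : ∃ m, k + 2 * l + 1 = 2 * m + 1 ∨ k + 2 * l + 1 = 2 * m + 2 :=
      ⟨(k + 2 * l) / 2, by omega⟩
    rcases hm with hm | hm
    · convert K.add_mem (hh m (by omega) (by omega))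
        (hA (m - l) 0 k (by omega) (by omega) (by omega)) using 1
      rw [hm, hj', hq]; ring
    · convert K.add_mem (K.add_mem (hh m (by omega) (by omega)) (hh 0 (by omega) (by omega)))
        (hA (m - l) 0 (k - 1) (by omega) (by omega) (by omega)) using 1
      rw [hm, hj', hq]; ring
  · exact plain
  · by_cases hE1 : m + j + l + 1 = 2 * p
    · rw [hE1]
      convert plain using 1
      rw [hq]; ring
    convert K.add_mem (hf (m + j + l) (by omega) (by omega))
        (hA (m + j) j k (by omega) (by omega) (by omega)) using 1
    rw [hq]; ring

theorem ap_natVal_add {p q E a C : ℕ} (hp : 2 ≤ p) (hq : q = 2 * p * p)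
    (h : C = a + (q - p * E)) : ApVal p q E a 1 C := by
  rcases Nat.le_total (2 * p) E with hE | hE
  · have : p * (2 * p) ≤ p * E := Nat.mul_le_mul_left p hE
    have h0 : q - p * E = 0 := Nat.sub_eq_zero_of_le (by rw [hq]; linarith)
    exact Or.inl ⟨by exact_mod_cast hE, by rw [h, h0]; simp⟩
  · have : p * E ≤ p * (2 * p) := Nat.mul_le_mul_left p hE
    have h0 : p * E ≤ q := by rw [hq]; linarith
    exact Or.inr ⟨by exact_mod_cast hE, by rw [h]; push_cast [Nat.cast_sub h0]; ring⟩

theorem ap_natVal_sub {p q E l C : ℕ} (hp : 2 ≤ p) (hq : q = 2 * p * p) (hl : l + 1 ≤ q)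
    (hEl : l + 1 ≤ E)
    (h : C = q - l - 1 - (q - p * E)) : ApVal p q E (q - l - 1) (-1) C := by
  rcases Nat.le_total (2 * p) E with hE | hE
  · have : p * (2 * p) ≤ p * E := Nat.mul_le_mul_left p hE
    have h0 : q - p * E = 0 := Nat.sub_eq_zero_of_le (by rw [hq]; linarith)
    exact Or.inl ⟨by exact_mod_cast hE, by rw [h, h0]; omega⟩
  · have : p * E ≤ p * (2 * p) := Nat.mul_le_mul_left p hE
    have h0 : p * E ≤ q := by rw [hq]; linarith
    have h1 : l + 1 ≤ p * E := le_trans hEl (Nat.le_mul_of_pos_left _ (by omega))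
    refine Or.inr ⟨by exact_mod_cast hE, ?_⟩
    have h2 : C + l + 1 = p * E := by omega
    have h3 : (C : ℤ) + l + 1 = p * E := by exact_mod_cast h2
    linarith

set_option maxHeartbeats 2000000 in
theorem stmt_11 (s : ℕ) (hs : 1 ≤ s) (q₀ q g₀ g₁ g₂ g₃ g₄ : ℕ)
    (hq₀ : q₀ = 2 ^ s) (hq : q = 2 * q₀ ^ 2)
    (hg₀ : g₀ = q ^ 2 - q + 1) (hg₁ : g₁ = q ^ 2 - 2 * q₀ + 1)
    (hg₂ : g₂ = q ^ 2 - q₀ + 1) (hg₃ : g₃ = q ^ 2) (hg₄ : g₄ = q ^ 2 + 1)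
    (H : AddSubmonoid ℕ)
    (hH : H = AddSubmonoid.closure
      ({g₀, g₁, g₂, g₃, g₄} ∪
        {x | ∃ i : ℕ, i + 2 ≤ 2 * q₀ ∧ x = (i + 1) * q₀ * g₀ - i * g₄ - 1} ∪
        {x | ∃ j : ℕ, j + 2 ≤ q₀ ∧ x = (2 * j + 1) * q₀ * g₀ - j * g₄ - q₀}))
    (φ : ℕ → ℕ)
    (hφlow : ∀ i l k j : ℕ, i ≤ q * (q - 2) / 2 → i = l * q + k * q₀ + j →
      j + 1 ≤ q₀ → k + 1 ≤ 2 * q₀ →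
      φ i = if j = 0 ∧ k = 0 then l
            else if j = 0 then l + 1 + (q - q₀ * (k + 2 * l + 2))
            else l + 1 + (q - q₀ * ((k + 1) / 2 + j + l + 1)))
    (hφhigh : ∀ i l k j : ℕ, q * (q - 2) / 2 + 1 ≤ i → i ≤ q ^ 2 - q →
      q ^ 2 - q - i = l * q + k * q₀ + j →
      j + 1 ≤ q₀ → k + 1 ≤ 2 * q₀ →
      φ i = if j = q₀ - 1 then q - l - 1 - (q - q₀ * (k + 2 * l + 1))
            else q - l - 1 - (q - q₀ * ((k + 1) / 2 + j + l + 1))) :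
    {z : ℕ | z ∈ H ∧ ¬ ∃ w : ℕ, w ∈ H ∧ z = w + g₀} =
      {x : ℕ | ∃ i : ℕ, i ≤ q ^ 2 - q ∧ x = φ i * g₀ + i} := by
  have hp : 2 ≤ q₀ := by
    rw [hq₀]; exact le_self_pow₀ (M₀ := ℕ) (by norm_num) (by omega)
  have hq' : q = 2 * q₀ * q₀ := by rw [hq]; ring
  have hpZ : (2 : ℤ) ≤ (q₀ : ℤ) := by exact_mod_cast hp
  have hqZ : (q : ℤ) = 2 * q₀ * q₀ := by exact_mod_cast hq'
  have hqp : 4 * q₀ ≤ q := by nlinarith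
  have hqq : q ≤ q ^ 2 := by nlinarith
  have hqq2 : 2 * q ≤ q ^ 2 := by nlinarith
  have G0 : (g₀ : ℤ) = q * q - q + 1 := by rw [hg₀]; push_cast [Nat.cast_sub hqq]; ring
  have G1 : (g₁ : ℤ) = q * q - 2 * q₀ + 1 := by
    rw [hg₁]; push_cast [Nat.cast_sub (by omega : 2 * q₀ ≤ q ^ 2)]; ring
  have G2 : (g₂ : ℤ) = q * q - q₀ + 1 := by
    rw [hg₂]; push_cast [Nat.cast_sub (by omega : q₀ ≤ q ^ 2)]; ring
  have G3 : (g₃ : ℤ) = q * q := by rw [hg₃]; push_cast; ring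
  have G4 : (g₄ : ℤ) = q * q + 1 := by rw [hg₄]; push_cast; ring
  have h2g : g₄ + 1 ≤ 2 * g₀ := by omega
  have hqg : q₀ ≤ g₀ := by omega
  have F : ∀ i : ℕ, (((i + 1) * q₀ * g₀ - i * g₄ - 1 : ℕ) : ℤ)
      = (i + 1) * q₀ * (q * q - q + 1) - i * (q * q + 1) - 1 := by
    intro i
    have h1 : (i + 1) * (g₄ + 1) ≤ (i + 1) * q₀ * g₀ := by
      calc (i + 1) * (g₄ + 1) ≤ (i + 1) * (2 * g₀) := Nat.mul_le_mul_left _ h2g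
        _ ≤ (i + 1) * (q₀ * g₀) := Nat.mul_le_mul_left _ (Nat.mul_le_mul_right _ hp)
        _ = _ := by ring
    have h2 : i * g₄ + 1 ≤ (i + 1) * q₀ * g₀ := by linarith
    rw [← G0, ← G4, Nat.sub_sub, Nat.cast_sub h2]; push_cast; ring
  have Hh : ∀ i : ℕ, (((2 * i + 1) * q₀ * g₀ - i * g₄ - q₀ : ℕ) : ℤ)
      = (2 * i + 1) * q₀ * (q * q - q + 1) - i * (q * q + 1) - q₀ := by
    intro i
    have h1 : (2 * i + 1) * 2 * g₀ ≤ (2 * i + 1) * q₀ * g₀ :=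
      Nat.mul_le_mul_right _ (Nat.mul_le_mul_left _ hp)
    have h3 : i * (g₄ + 1) ≤ i * (2 * g₀) := Nat.mul_le_mul_left _ h2g
    have h4 : 0 ≤ i * g₀ := Nat.zero_le _
    have h2 : i * g₄ + q₀ ≤ (2 * i + 1) * q₀ * g₀ := by linarith
    rw [← G0, ← G4, Nat.sub_sub, Nat.cast_sub h2]; push_cast; ring
  -- H is contained in M
  have hM : ∀ n ∈ H, ApM q₀ q (n : ℤ) := by
    intro n hn
    rw [hH] at hn
    induction hn using AddSubmonoid.closure_induction with
    | zero => exact ⟨0, 0, 0, 0, 0, by simp⟩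
    | add a b _ _ ha hb => push_cast; exact ha.add hb
    | mem x hx =>
      rcases hx with (hx | ⟨i, hi, rfl⟩) | ⟨i, hi, rfl⟩
      · simp only [Set.mem_insert_iff, Set.mem_singleton_iff] at hx
        rcases hx with rfl | rfl | rfl | rfl | rfl
        · exact ⟨0, 0, 0, 0, 1, by norm_num, by norm_num, by norm_num, by norm_num,
            by rw [G0]; ring, by norm_num, by norm_num⟩
        · exact ⟨1, 0, 2, 0, 0, by norm_num, by norm_num, by norm_num, by norm_num,
            by rw [G1]; ring, by norm_num, by norm_num⟩
        · exact ⟨1, 0, 1, 0, 0, by norm_num, by norm_num, by norm_num, by norm_num,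
            by rw [G2]; ring, by norm_num, by norm_num⟩
        · exact ⟨1, 1, 0, 0, 0, by norm_num, by norm_num, by norm_num, by norm_num,
            by rw [G3]; ring, by norm_num, by norm_num⟩
        · exact ⟨1, 0, 0, 0, 0, by norm_num, by norm_num, by norm_num, by norm_num,
            by rw [G4]; ring, by norm_num, by norm_num⟩
      · exact ⟨-i, 1, 0, i + 1, 0, by omega, by omega, by omega, by omega,
          by rw [F]; ring, by omega, by omega⟩
      · exact ⟨-i, 0, 1, 2 * i + 1, 0, by omega, by omega, by omega, by omega,
          by rw [Hh]; ring, by omega, by omega⟩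
  -- integer version of H
  obtain ⟨K, hK⟩ : ∃ K : AddSubmonoid ℤ, K = H.map (Nat.castAddMonoidHom ℤ) := ⟨_, rfl⟩
  have hHK : ∀ n : ℕ, n ∈ H → (n : ℤ) ∈ K := fun n hn => by
    rw [hK]; exact ⟨n, hn, rfl⟩
  have hKH : ∀ n : ℕ, (n : ℤ) ∈ K → n ∈ H := fun n hn => by
    rw [hK] at hn
    obtain ⟨m, hm, h⟩ := hn
    have : m = n := by simpa using h
    exact this ▸ hm
  have hsub := AddSubmonoid.subset_closure (s := ({g₀, g₁, g₂, g₃, g₄} ∪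
        {x | ∃ i : ℕ, i + 2 ≤ 2 * q₀ ∧ x = (i + 1) * q₀ * g₀ - i * g₄ - 1} ∪
        {x | ∃ j : ℕ, j + 2 ≤ q₀ ∧ x = (2 * j + 1) * q₀ * g₀ - j * g₄ - q₀}))
  rw [← hH] at hsub
  have hg0H : g₀ ∈ H := hsub (Or.inl (Or.inl (by simp)))
  have K1 := hHK g₁ (hsub (Or.inl (Or.inl (by simp))))
  have K2 := hHK g₂ (hsub (Or.inl (Or.inl (by simp))))
  have K3 := hHK g₃ (hsub (Or.inl (Or.inl (by simp))))
  have K4 := hHK g₄ (hsub (Or.inl (Or.inl (by simp))))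
  rw [G1] at K1
  rw [G2] at K2
  rw [G3] at K3
  rw [G4] at K4
  have Kf : ∀ i : ℤ, 0 ≤ i → i + 2 ≤ 2 * (q₀ : ℤ) →
      (i + 1) * q₀ * ((q : ℤ) * q - q + 1) - i * (q * q + 1) - 1 ∈ K := by
    intro i hi hi2
    lift i to ℕ using hi
    rw [← F]
    exact hHK _ (hsub (Or.inl (Or.inr ⟨i, by omega, rfl⟩)))
  have Kh : ∀ i : ℤ, 0 ≤ i → i + 2 ≤ (q₀ : ℤ) →
      (2 * i + 1) * q₀ * ((q : ℤ) * q - q + 1) - i * (q * q + 1) - q₀ ∈ K := by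
    intro i hi hi2
    lift i to ℕ using hi
    rw [← Hh]
    exact hHK _ (hsub (Or.inr ⟨i, by omega, rfl⟩))
  have hdec : ∀ n : ℕ, ∃ l k j : ℕ, n = l * q + k * q₀ + j ∧ j + 1 ≤ q₀ ∧ k + 1 ≤ 2 * q₀ := by
    intro n
    have hq0pos : 0 < q₀ := by omega
    refine ⟨n / q₀ / (2 * q₀), n / q₀ % (2 * q₀), n % q₀, ?_, Nat.mod_lt _ hq0pos,
      Nat.mod_lt _ (by omega)⟩
    have h1 := Nat.div_add_mod n q₀
    have h2 := Nat.div_add_mod (n / q₀) (2 * q₀)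
    rw [hq']
    calc n = q₀ * (n / q₀) + n % q₀ := h1.symm
      _ = q₀ * (2 * q₀ * (n / q₀ / (2 * q₀)) + n / q₀ % (2 * q₀)) + n % q₀ := by rw [h2]
      _ = _ := by ring
  have hev : 2 * (q * (q - 2) / 2) = q * (q - 2) := by
    apply Nat.mul_div_cancel'
    rw [hq', mul_assoc, mul_assoc]
    exact dvd_mul_right _ _
  have hevZ : 2 * ((q * (q - 2) / 2 : ℕ) : ℤ) = q * (q - 2) := by
    have : ((2 * (q * (q - 2) / 2) : ℕ) : ℤ) = ((q * (q - 2) : ℕ) : ℤ) := by rw [hev]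
    push_cast [Nat.cast_sub (by omega : 2 ≤ q)] at this ⊢
    exact this
  have key : ∀ i : ℕ, i ≤ q ^ 2 - q → φ i * g₀ + i ∈ H ∧ ∀ c : ℕ, c * g₀ + i ∈ H → φ i ≤ c := by
    intro i hi
    rcases Nat.lt_or_ge (q * (q - 2) / 2) i with hlt | hle
    · obtain ⟨l, k, j, hn, hj, hk⟩ := hdec (q ^ 2 - q - i)
      have hv := hφhigh i l k j hlt hi hn hj hk
      have hiZ : (i : ℤ) = q * q - q - (l * q + k * q₀ + j) := by
        have h1 : i + (l * q + k * q₀ + j) + q = q ^ 2 := by omega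
        have h2 : (i : ℤ) + (l * q + k * q₀ + j) + q = q ^ 2 := by exact_mod_cast h1
        linarith
      have hiZ' : ((q * (q - 2) / 2 : ℕ) : ℤ) + 1 ≤ i := by exact_mod_cast hlt
      have hkp : (0 : ℤ) ≤ k * q₀ := by positivity
      have hlq : 2 * (l : ℤ) ≤ q - 2 := by
        by_contra hh
        have : (q : ℤ) * q ≤ q * (2 * l) := by
          apply mul_le_mul_of_nonneg_left _ (by positivity)
          have : 2 * (q₀ * q₀) = q := by rw [hq']; ring
          omega
        linarith
      have hval : ApHighVal q₀ q l k j (φ i) := by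
        split_ifs at hv with h
        · refine Or.inl ⟨by omega, ?_⟩
          have := ap_natVal_sub hp hq' (by omega) (by omega) hv
          push_cast at this
          exact this
        · refine Or.inr ⟨by omega, ((k + 1) / 2 : ℕ), by omega, by omega, ?_⟩
          have := ap_natVal_sub hp hq' (by omega) (by omega) hv
          push_cast at this ⊢
          exact this
      constructor
      · apply hKH
        push_cast
        rw [G0, hiZ]
        exact ap_high_mem hpZ hqZ K1 K2 K3 K4 Kf Kh (by omega) (by omega) (by omega) (by omega)
          (by omega) hlq hval
      · intro c hc
        have := hval.le hpZ hqZ (ap_high_main (c := c) hpZ hqZ (by omega) (by omega) (by omega)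
          (by omega) (by omega) (by linarith) (hM _ hc) (by push_cast; rw [G0, hiZ]))
        exact_mod_cast this
    · obtain ⟨l, k, j, hn, hj, hk⟩ := hdec i
      have hv := hφlow i l k j hle hn hj hk
      have hiZ : (i : ℤ) = l * q + k * q₀ + j := by exact_mod_cast hn
      have hiZ' : (i : ℤ) ≤ ((q * (q - 2) / 2 : ℕ) : ℤ) := by exact_mod_cast hle
      have hval : ApLowVal q₀ q l k j (φ i) := by
        split_ifs at hv with h h'
        · exact Or.inl ⟨by omega, by omega, by omega⟩
        · refine Or.inr (Or.inl ⟨by omega, by omega, ?_⟩)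
          have := ap_natVal_add hp hq' hv
          push_cast at this
          exact this
        · refine Or.inr (Or.inr ⟨by omega, ((k + 1) / 2 : ℕ), by omega, by omega, ?_⟩)
          have := ap_natVal_add hp hq' hv
          push_cast at this ⊢
          exact this
      constructor
      · apply hKH
        push_cast
        rw [G0, hiZ]
        exact ap_low_mem hpZ hqZ K1 K2 K3 K4 Kf Kh (by omega) (by omega) (by omega) (by omega)
          (by omega) hval
      · intro c hc
        have := hval.le (ap_low_main (c := c) hpZ hqZ (by omega) (by omega) (by omega)
          (by omega) (by omega) (by linarith) (hM _ hc) (by push_cast; rw [G0, hiZ]))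
        exact_mod_cast this
  have hg0pos : 0 < g₀ := by omega
  ext z
  simp only [Set.mem_setOf_eq]
  constructor
  · rintro ⟨hz, hnz⟩
    have hi : z % g₀ ≤ q ^ 2 - q := by
      have := Nat.mod_lt z hg0pos
      omega
    have hdm : z / g₀ * g₀ + z % g₀ = z := by rw [mul_comm]; exact Nat.div_add_mod z g₀
    refine ⟨z % g₀, hi, ?_⟩
    obtain ⟨h1, h2⟩ := key _ hi
    have h3 := h2 (z / g₀) (by rw [hdm]; exact hz)
    rcases Nat.eq_or_lt_of_le h3 with h4 | h4
    · rw [h4, hdm]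
    · exfalso
      apply hnz
      obtain ⟨e, he⟩ := Nat.exists_eq_add_of_lt h4
      refine ⟨(φ (z % g₀) * g₀ + z % g₀) + e * g₀, H.add_mem h1 ?_, ?_⟩
      · have := H.nsmul_mem hg0H e
        simpa using this
      · conv_lhs => rw [← hdm, he]
        ring
  · rintro ⟨i, hi, rfl⟩
    obtain ⟨h1, h2⟩ := key i hi
    refine ⟨h1, ?_⟩
    rintro ⟨w, hw, h⟩
    have hφ : φ i ≠ 0 := by
      intro h0
      rw [h0] at h
      omega
    obtain ⟨c, hc⟩ := Nat.exists_eq_succ_of_ne_zero hφ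
    have hw' : w = c * g₀ + i := by
      rw [hc, Nat.succ_mul] at h
      omega
    have := h2 c (hw' ▸ hw)
    omega
end
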